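/- arXiv:1906.07437 — 10 statements merged into one kernel-verified Lean document; each statement's English description precedes it below -/
import Mathlib

section
/- (Reduction underlying NP-hardness of inverting a binary two-layer ReLU network.) Let φ be a 3-CNF formula over k Boolean variables with m clauses, and let W ∈ ℝ^{m×k} be its clause matrix. Then φ is satisfiable if and only if there exists z ∈ {−1,1}^k such that Σ_{i=1}^{m} ReLU((Wz)_i − 2) = 0. In particular, deciding whether the two-layer network G(z) = 𝟙ᵀ · ReLU(Wz − 2·𝟙) attains the output value 0 on some binary input z ∈ {−1,1}^k is equivalent to deciding satisfiability of φ. -/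
/-- ReLU applied to a real number. -/
noncomputable def relu (t : ℝ) : ℝ := max t 0

/-- A 3-CNF formula over `k` Boolean variables with `m` clauses: clause `i` consists of
three literals, each a pair of a variable index and a sign (`true` = positive literal). -/
structure CNF3 (k m : ℕ) where
  lit : Fin m → Fin 3 → Fin k × Bool

/-- A Boolean assignment `σ` satisfies the formula if every clause contains at least one
satisfied literal (a positive literal on variable `j` is satisfied iff `σ j = true`,
a negative literal iff `σ j = false`). -/
def CNF3.Satisfiable {k m : ℕ} (φ : CNF3 k m) : Prop :=
  ∃ σ : Fin k → Bool, ∀ i : Fin m, ∃ l : Fin 3, σ (φ.lit i l).1 = (φ.lit i l).2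

/-- The clause matrix `W ∈ ℝ^{m×k}`: entry `W i j` is the sum, over occurrences of
variable `j` in clause `i`, of `−1` for each positive literal and `+1` for each
negative literal. -/
noncomputable def CNF3.clauseMatrix {k m : ℕ} (φ : CNF3 k m) : Matrix (Fin m) (Fin k) ℝ :=
  Matrix.of fun i j =>
    ∑ l : Fin 3, if (φ.lit i l).1 = j then (if (φ.lit i l).2 then (-1 : ℝ) else 1) else 0

theorem CNF3.mulVec_eq {k m : ℕ} (φ : CNF3 k m) (z : Fin k → ℝ) (i : Fin m) :
    φ.clauseMatrix.mulVec z i =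
      ∑ l : Fin 3, (if (φ.lit i l).2 then (-1 : ℝ) else 1) * z (φ.lit i l).1 := by
  simp only [Matrix.mulVec, dotProduct, CNF3.clauseMatrix, Matrix.of_apply, Finset.sum_mul]
  rw [Finset.sum_comm]
  refine Finset.sum_congr rfl fun l _ => ?_
  simp only [ite_mul, zero_mul, Finset.sum_ite_eq, Finset.mem_univ, if_true]

theorem CNF3.sum_relu_iff {k m : ℕ} (φ : CNF3 k m) (σ : Fin k → Bool) :
    (∑ i : Fin m, relu (φ.clauseMatrix.mulVec (fun j => if σ j then (1 : ℝ) else -1) i - 2) = 0)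
      ↔ ∀ i : Fin m, ∃ l : Fin 3, σ (φ.lit i l).1 = (φ.lit i l).2 := by
  rw [Finset.sum_eq_zero_iff_of_nonneg (fun i _ => by unfold relu; exact le_max_right _ _)]
  simp only [Finset.mem_univ, true_implies]
  refine forall_congr' fun i => ?_
  rw [CNF3.mulVec_eq, relu, max_eq_right_iff, Fin.sum_univ_three, Fin.exists_fin_succ,
    Fin.exists_fin_two]
  change _ ↔ (σ (φ.lit i 0).1 = (φ.lit i 0).2 ∨ σ (φ.lit i 1).1 = (φ.lit i 1).2 ∨
    σ (φ.lit i 2).1 = (φ.lit i 2).2)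
  generalize σ (φ.lit i 0).1 = a
  generalize σ (φ.lit i 1).1 = b
  generalize σ (φ.lit i 2).1 = c
  generalize (φ.lit i 0).2 = d
  generalize (φ.lit i 1).2 = e
  generalize (φ.lit i 2).2 = f
  cases a <;> cases b <;> cases c <;> cases d <;> cases e <;> cases f <;> norm_num

/-- **Reduction underlying NP-hardness of inverting a binary two-layer ReLU network.**
A 3-CNF formula `φ` with clause matrix `W` is satisfiable iff there exists
`z ∈ {−1,1}^k` with `Σ_{i=1}^{m} ReLU((Wz)_i − 2) = 0`, i.e. iff the two-layer
network `G(z) = 𝟙ᵀ · ReLU(Wz − 2·𝟙)` attains the value `0` on some binary input. -/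
theorem cnf3_satisfiable_iff_binary_network_inversion
    (k m : ℕ) (φ : CNF3 k m) :
    φ.Satisfiable ↔
      ∃ z : Fin k → ℝ, (∀ j, z j = -1 ∨ z j = 1) ∧
        ∑ i : Fin m, relu (φ.clauseMatrix.mulVec z i - 2) = 0 := by
  constructor
  · rintro ⟨σ, h⟩
    refine ⟨fun j => if σ j then (1 : ℝ) else -1, fun j => ?_, (φ.sum_relu_iff σ).2 h⟩
    cases h' : σ j <;> simp [h']
  · rintro ⟨z, hz, h⟩
    have e : z = fun j => if decide (z j = 1) then (1 : ℝ) else -1 := by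
      funext j
      rcases hz j with h | h <;> rw [h] <;> norm_num
    refine ⟨fun j => decide (z j = 1), (φ.sum_relu_iff (fun j => decide (z j = 1))).1 ?_⟩
    rw [← e]
    exact h
end

section
/- (Reduction underlying NP-hardness of inverting a real-valued four-layer ReLU network.) Let φ be a 3-CNF formula over k Boolean variables with m clauses, and let W ∈ ℝ^{m×k} be its clause matrix. Define clamp : ℝ → ℝ by clamp(t) = min(max(t,−1),1), applied coordinate-wise, and for z ∈ ℝ^k set v = clamp(z). Then φ is satisfiable if and only if there exists z ∈ ℝ^k such that Σ_{i=1}^{m} ReLU((Wv)_i − 2) = 0 and Σ_{j=1}^{k} |v_j| = k. (The map z ↦ (Σ_i ReLU((W·clamp(z))_i − 2), Σ_j |clamp(z)_j|) is realizable as a four-layer ReLU network, so inverting four-layer ReLU networks over real inputs encodes 3SAT.) -/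
/-- `clamp t = min(max(t,−1),1)`. -/
noncomputable def clamp (t : ℝ) : ℝ := min (max t (-1)) 1

theorem CNF3.mulVec_aux {k m : ℕ} (φ : CNF3 k m) (v : Fin k → ℝ) (i : Fin m) :
    φ.clauseMatrix.mulVec v i =
      ∑ l : Fin 3, (if (φ.lit i l).2 then (-1 : ℝ) else 1) * v (φ.lit i l).1 := by
  simp only [CNF3.clauseMatrix, Matrix.mulVec, dotProduct, Matrix.of_apply, Finset.sum_mul]
  rw [Finset.sum_comm]
  refine Finset.sum_congr rfl fun l _ => ?_
  simp [ite_mul]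

theorem abs_clamp_le_aux (t : ℝ) : |clamp t| ≤ 1 := by
  unfold clamp
  rw [abs_le]
  exact ⟨le_min (le_max_right _ _) (by norm_num), min_le_right _ _⟩

/-- **Reduction underlying NP-hardness of inverting a real-valued four-layer ReLU
network.**  With `v = clamp(z)` applied coordinate-wise, a 3-CNF formula `φ` with clause
matrix `W` is satisfiable iff there exists `z ∈ ℝ^k` such that
`Σ_{i=1}^{m} ReLU((Wv)_i − 2) = 0` and `Σ_{j=1}^{k} |v_j| = k`. -/
theorem cnf3_satisfiable_iff_real_network_inversion
    (k m : ℕ) (φ : CNF3 k m) :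
    φ.Satisfiable ↔
      ∃ z : Fin k → ℝ,
        ∑ i : Fin m, relu (φ.clauseMatrix.mulVec (fun j => clamp (z j)) i - 2) = 0 ∧
        ∑ j : Fin k, |clamp (z j)| = (k : ℝ) := by
  constructor
  · rintro ⟨σ, hσ⟩
    have hc : ∀ j, clamp (if σ j then 1 else -1) = if σ j then (1 : ℝ) else -1 := by
      intro j
      cases σ j <;> norm_num [clamp]
    refine ⟨fun j => if σ j then 1 else -1, ?_, ?_⟩
    · refine Finset.sum_eq_zero fun i _ => ?_
      rw [relu, max_eq_right_iff, CNF3.mulVec_aux]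
      simp only [hc]
      have hb : ∀ l : Fin 3, (if (φ.lit i l).2 then (-1 : ℝ) else 1) *
          (if σ (φ.lit i l).1 then (1 : ℝ) else -1) ≤ 1 := by
        intro l
        cases (φ.lit i l).2 <;> cases σ (φ.lit i l).1 <;> norm_num
      obtain ⟨l, hl⟩ := hσ i
      have hn : (if (φ.lit i l).2 then (-1 : ℝ) else 1) *
          (if σ (φ.lit i l).1 then (1 : ℝ) else -1) = -1 := by
        rw [hl]
        cases (φ.lit i l).2 <;> norm_num
      rw [Fin.sum_univ_three]
      have h0 := hb 0
      have h1 := hb 1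
      have h2 := hb 2
      fin_cases l <;> simp only [Fin.zero_eta, Fin.mk_one, Fin.reduceFinMk] at hn <;> linarith
    · have : ∀ j, |clamp (if σ j then 1 else -1)| = 1 := by
        intro j
        rw [hc]
        cases σ j <;> norm_num
      simp [this]
  · rintro ⟨z, h1, h2⟩
    have hv : ∀ j, |clamp (z j)| = 1 := by
      have h3 : ∑ j : Fin k, |clamp (z j)| = ∑ j : Fin k, (1 : ℝ) := by simp [h2]
      have := (Finset.sum_eq_sum_iff_of_le (fun j _ => abs_clamp_le_aux (z j))).1 h3
      exact fun j => this j (Finset.mem_univ j)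
    refine ⟨fun j => decide (clamp (z j) = 1), fun i => ?_⟩
    by_contra hcon
    push Not at hcon
    have hr := (Finset.sum_eq_zero_iff_of_nonneg
      (fun i _ => by unfold relu; exact le_max_right _ _)).1 h1 i (Finset.mem_univ i)
    rw [relu, max_eq_right_iff, CNF3.mulVec_aux] at hr
    have hl : ∀ l : Fin 3,
        (if (φ.lit i l).2 then (-1 : ℝ) else 1) * clamp (z (φ.lit i l).1) = 1 := by
      intro l
      have h := hcon l
      have hz := hv (φ.lit i l).1
      rcases (abs_eq zero_le_one).1 hz with h' | h' <;> rw [h'] at h ⊢ <;>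
        cases hs : (φ.lit i l).2 <;> rw [hs] at h <;> first | (norm_num; done) | (exfalso; norm_num at h; done)
    simp only [hl] at hr
    norm_num at hr
end

section
/- (Injectivity of a random expansive ReLU layer at a given point.) Let k, n be positive integers with n ≥ (21/10)·k, let z* ∈ ℝ^k be fixed, and let W be a random n×k matrix with i.i.d. standard Gaussian entries. Then with probability at least 1 − exp(−2(n/2 − k)²/n), every z ∈ ℝ^k with ReLU(Wz) = ReLU(Wz*) satisfies z = z*; that is, the ReLU layer z ↦ ReLU(Wz) is invertible at z*, and z* is recovered as the unique solution of the linear system formed by the positive coordinates of the observation. -/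
open MeasureTheory ProbabilityTheory

/-- The law of a random `n × k` matrix (viewed as `Fin n → Fin k → ℝ`) with i.i.d.
standard Gaussian entries: the product over all entries of `N(0,1)`. -/
noncomputable def stdGaussianMatrix (n k : ℕ) : Measure (Fin n → Fin k → ℝ) :=
  Measure.pi fun _ : Fin n => Measure.pi fun _ : Fin k => gaussianReal 0 1


/-- sign flip of the rows outside `A`. -/
noncomputable def rowFlip {n k : ℕ} (A : Finset (Fin n)) (W : Fin n → Fin k → ℝ) :
    Fin n → Fin k → ℝ := fun i => (if i ∈ A then id else fun w => -w) (W i)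

def ReluGood {n k : ℕ} (zstar : Fin k → ℝ) (W : Fin n → Fin k → ℝ) : Prop :=
  ∀ z : Fin k → ℝ,
    (∀ i, relu ((Matrix.of W).mulVec z i) = relu ((Matrix.of W).mulVec zstar i)) → z = zstar

theorem ae_of_forall_update {n : ℕ} {E : Type} [MeasurableSpace E] (μ : Fin n → Measure E)
    [∀ i, SigmaFinite (μ i)] (i : Fin n) (p : (Fin n → E) → Prop) (hp : MeasurableSet {W | p W})
    (h : ∀ W, ∀ᵐ w ∂(μ i), p (Function.update W i w)) : ∀ᵐ W ∂(Measure.pi μ), p W := by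
  obtain _ | m := n
  · exact i.elim0
  have mp := measurePreserving_piFinSuccAbove μ i
  have mp' := mp.symm
  rw [← mp'.map_eq, ae_map_iff mp'.measurable.aemeasurable hp]
  have hm : MeasurableSet {x : E × (Fin m → E) | p ((MeasurableEquiv.piFinSuccAbove (fun _ => E) i).symm x)} :=
    mp'.measurable hp
  rw [Measure.ae_prod_iff_ae_ae hm]
  refine (Measure.ae_ae_comm (μ := μ i) (ν := Measure.pi fun j => μ (i.succAbove j))
    (p := fun x y => p ((MeasurableEquiv.piFinSuccAbove (fun _ => E) i).symm (x, y))) hm).2 ?_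
  refine Filter.Eventually.of_forall fun y => ?_
  by_cases hE : Nonempty E
  · obtain ⟨e⟩ := hE
    filter_upwards [h (i.insertNth e y)] with x hx
    rw [Fin.update_insertNth] at hx
    exact hx
  · filter_upwards with x
    exact (hE ⟨x⟩).elim

theorem ae_functional_ne {k : ℕ} (f : (Fin k → ℝ) →ₗ[ℝ] ℝ) (hf : f ≠ 0) :
    ∀ᵐ w ∂(Measure.pi fun _ : Fin k => gaussianReal 0 1), f w ≠ 0 := by
  have hj : ∃ j, f (Pi.single j 1) ≠ 0 := by
    by_contra! hc
    apply hf
    ext j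
    simpa using hc j
  obtain ⟨j, hj⟩ := hj
  have hfc : Continuous f := f.continuous_of_finiteDimensional
  refine ae_of_forall_update _ j _ ?_ ?_
  · exact (isOpen_ne.preimage hfc).measurableSet
  · intro W
    have key : ∀ w : ℝ, f (Function.update W j w) = f W + (w - W j) * f (Pi.single j 1) := by
      intro w
      have : Function.update W j w = W + (w - W j) • Pi.single j 1 := by
        ext l
        by_cases hl : l = j
        · subst hl; simp
        · simp [hl]
      rw [this, map_add, map_smul, smul_eq_mul]
    have := nullSingletonClass_gaussianReal (μ := 0) (v := 1) one_ne_zero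
    have : ∀ᵐ w ∂(gaussianReal 0 1), w ≠ W j - f W / f (Pi.single j 1) := by
      rw [ae_iff]
      simp
    filter_upwards [this] with w hw
    rw [key]
    intro h0
    apply hw
    field_simp
    linarith

theorem ae_linearIndepOn (n k : ℕ) (T : Finset (Fin n)) (hT : T.card ≤ k) :
    ∀ᵐ W ∂(stdGaussianMatrix n k), LinearIndepOn ℝ W (T : Set (Fin n)) := by
  classical
  have hmeas : ∀ T : Finset (Fin n),
      MeasurableSet {W : Fin n → Fin k → ℝ | LinearIndepOn ℝ W (T : Set (Fin n))} := by
    intro T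
    have h1 : Continuous fun (W : Fin n → Fin k → ℝ) (x : (T : Set (Fin n))) => W x := by
      fun_prop
    exact ((isOpen_setOfPred_linearIndependent (𝕜 := ℝ)).preimage h1).measurableSet
  induction T using Finset.induction_on with
  | empty => simp
  | insert i T hi ih =>
    rw [Finset.card_insert_of_notMem hi] at hT
    have step : ∀ᵐ W ∂(stdGaussianMatrix n k), LinearIndepOn ℝ W (T : Set (Fin n)) →
        LinearIndepOn ℝ W ((insert i T : Finset (Fin n)) : Set (Fin n)) := by
      refine ae_of_forall_update _ i _ ?_ ?_
      · exact (hmeas T).imp (hmeas _)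
      · intro W
        have hlt : Submodule.span ℝ (W '' (T : Set (Fin n))) < ⊤ := by
          rw [lt_top_iff_ne_top]
          intro htop
          have h1 := finrank_span_finset_le_card (R := ℝ) (T.image W)
          rw [Finset.coe_image, Set.finrank, htop, finrank_top, Module.finrank_fin_fun] at h1
          have h2 := Finset.card_image_le (s := T) (f := W)
          omega
        obtain ⟨f, hf0, hf⟩ := Submodule.exists_le_ker_of_lt_top _ hlt
        filter_upwards [ae_functional_ne f hf0] with w hw hLI
        rw [Finset.coe_insert]
        refine hLI.insert ?_
        have himg : Function.update W i w '' (T : Set (Fin n)) = W '' (T : Set (Fin n)) := by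
          apply Set.image_congr
          intro a ha
          rw [Function.update_of_ne]
          rintro rfl
          exact hi ha
        rw [himg, Function.update_self]
        intro hmem
        exact hw (hf hmem)
    filter_upwards [step, ih (by omega)] with W h1 h2 using h1 h2

theorem rowFlip_measurePreserving {n k : ℕ} (A : Finset (Fin n)) :
    MeasurePreserving (rowFlip (k := k) A) (stdGaussianMatrix n k) (stdGaussianMatrix n k) := by
  refine measurePreserving_pi _ _ (f := fun i => if i ∈ A then id else fun w => -w) ?_
  intro i
  by_cases hi : i ∈ A
  · simp only [hi, if_true]; exact MeasurePreserving.id _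
  · simp only [hi, if_false]
    refine measurePreserving_pi _ _ (f := fun _ x => -x) ?_
    intro j
    exact ⟨measurable_neg, by simpa using gaussianReal_map_neg (μ := 0) (v := 1)⟩

theorem relu_eq_pos {b a : ℝ} (ha : 0 < a) (h : relu b = relu a) : b = a := by
  unfold relu at h
  rw [max_eq_left ha.le] at h
  rcases max_choice b 0 with h1 | h1 <;> linarith

theorem relu_eq_zero {b : ℝ} (h : relu b = relu 0) : b ≤ 0 := by
  unfold relu at h
  simpa using h

theorem shatter_bound {n k : ℕ} (zstar : Fin k → ℝ) (W : Fin n → Fin k → ℝ)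
    (hW : ∀ T : Finset (Fin n), T.card ≤ k → LinearIndepOn ℝ W (T : Set (Fin n)))
    (𝒜 : Finset (Finset (Fin n))) (h𝒜 : ∀ A ∈ 𝒜, ¬ ReluGood zstar (rowFlip A W))
    (S : Finset (Fin n)) (hS : 𝒜.Shatters S) : S.card ≤ k := by
  classical
  by_contra! hlt
  obtain ⟨S', hS'S, hcard⟩ := Finset.exists_subset_card_eq (show k + 1 ≤ S.card from hlt)
  replace hS := hS.mono_right hS'S
  clear hS'S hlt
  have hnot : ¬ LinearIndepOn ℝ W (S' : Set (Fin n)) := by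
    intro hLI
    have := LinearIndependent.fintype_card_le_finrank hLI
    simp at this
    omega
  rw [linearIndepOn_finset_iff] at hnot
  push Not at hnot
  obtain ⟨c, hc, i0, hi0, hci0⟩ := hnot
  have hcne : ∀ i ∈ S', c i ≠ 0 := by
    intro i hi h0
    have hLI := hW (S'.erase i) (by rw [Finset.card_erase_of_mem hi]; omega)
    rw [linearIndepOn_finset_iff] at hLI
    have hsum : ∑ j ∈ S'.erase i, c j • W j = 0 := by
      rw [← hc, ← Finset.add_sum_erase _ _ hi, h0]; simp
    have hne : i0 ≠ i := by rintro rfl; exact hci0 h0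
    exact hci0 (hLI c hsum i0 (Finset.mem_erase.2 ⟨hne, hi0⟩))
  obtain ⟨A, hA, hSA⟩ := hS (Finset.filter_subset
    (fun i => 0 < W i ⬝ᵥ zstar ∨ (W i ⬝ᵥ zstar = 0 ∧ 0 < c i)) S')
  have hbad := h𝒜 A hA
  unfold ReluGood at hbad
  push Not at hbad
  obtain ⟨z, hz, hzne⟩ := hbad
  have hmemA : ∀ i ∈ S', (i ∈ A ↔ (0 < W i ⬝ᵥ zstar ∨ (W i ⬝ᵥ zstar = 0 ∧ 0 < c i))) := by
    intro i hi
    have := Finset.ext_iff.1 hSA i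
    simpa [hi] using this
  have hle : ∀ i ∈ S', c i * (W i ⬝ᵥ (z - zstar)) ≤ 0 := by
    intro i hi
    rw [dotProduct_sub]
    have hzi := hz i
    have hm := hmemA i hi
    simp only [Matrix.mulVec, Matrix.of_apply, rowFlip] at hzi
    by_cases hiA : i ∈ A
    · simp only [hiA, if_true, id] at hzi
      rcases hm.1 hiA with h | ⟨h, h'⟩
      · rw [relu_eq_pos h hzi]; simp
      · rw [h] at hzi ⊢
        have := relu_eq_zero hzi
        nlinarith
    · simp only [hiA, if_false, neg_dotProduct] at hzi
      have hm' : ¬ _ := fun hh => hiA (hm.2 hh)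
      push Not at hm'
      rcases hm'.1.lt_or_eq with h | h
      · have := relu_eq_pos (by linarith) hzi
        have h2 : W i ⬝ᵥ z = W i ⬝ᵥ zstar := by linarith
        rw [h2]; simp
      · have h' := hm'.2 h
        rw [h, neg_zero] at hzi
        rw [h]
        have := relu_eq_zero hzi
        nlinarith
  have hsum0 : ∑ i ∈ S', c i * (W i ⬝ᵥ (z - zstar)) = 0 := by
    have : (∑ i ∈ S', c i • W i) ⬝ᵥ (z - zstar) = 0 := by rw [hc]; simp
    rw [sum_dotProduct] at this
    simpa only [smul_dotProduct, smul_eq_mul] using this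
  have hz0 : ∀ i ∈ S', W i ⬝ᵥ (z - zstar) = 0 := by
    intro i hi
    have := (Finset.sum_eq_zero_iff_of_nonpos hle).1 hsum0 i hi
    exact (mul_eq_zero.1 this).resolve_left (hcne i hi)
  have hcardT : (S'.erase i0).card = k := by rw [Finset.card_erase_of_mem hi0]; omega
  have hLI := hW (S'.erase i0) hcardT.le
  have hspan := LinearIndependent.span_eq_top_of_card_eq_finrank' hLI (by simp [hcard, hi0])
  have hall : ∀ v : Fin k → ℝ, v ⬝ᵥ (z - zstar) = 0 := by
    intro v
    have hv : v ∈ Submodule.span ℝ (Set.range fun x : ((S'.erase i0 : Finset (Fin n)) : Set (Fin n)) => W x) := by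
      rw [hspan]; trivial
    induction hv using Submodule.span_induction with
    | mem x hx =>
      obtain ⟨⟨i, hi⟩, rfl⟩ := hx
      exact hz0 i (Finset.mem_of_mem_erase hi)
    | zero => simp
    | add x y _ _ hx hy => rw [add_dotProduct, hx, hy, add_zero]
    | smul a x _ hx => rw [smul_dotProduct, hx, smul_zero]
  exact hzne (sub_eq_zero.1 (dotProduct_self_eq_zero.1 (hall _)))

theorem chernoff_sum (n k : ℕ) (hn0 : 0 < n) (hn : 2 * k ≤ n) :
    ((∑ i ∈ Finset.Iic k, n.choose i : ℕ) : ℝ) ≤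
      2 ^ n * Real.exp (-2 * ((n : ℝ) / 2 - (k : ℝ)) ^ 2 / (n : ℝ)) := by
  have hnR : (0 : ℝ) < n := by exact_mod_cast hn0
  have hkn : 2 * (k : ℝ) ≤ n := by exact_mod_cast hn
  set t : ℝ := (n : ℝ) / 2 - k with ht
  have ht0 : 0 ≤ t := by rw [ht]; linarith
  set l : ℝ := 4 * t / n with hl
  have hl0 : 0 ≤ l := by positivity
  have h1 : ((∑ i ∈ Finset.Iic k, n.choose i : ℕ) : ℝ) ≤
      ∑ i ∈ Finset.range (n + 1), (n.choose i : ℝ) * Real.exp (l * (k - i)) := by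
    push_cast
    calc _ ≤ ∑ i ∈ Finset.Iic k, (n.choose i : ℝ) * Real.exp (l * (k - i)) := by
          apply Finset.sum_le_sum
          intro i hi
          have hik : (i : ℝ) ≤ k := by exact_mod_cast Finset.mem_Iic.1 hi
          have : 1 ≤ Real.exp (l * (k - i)) := Real.one_le_exp (mul_nonneg hl0 (by linarith))
          have h0 : (0 : ℝ) ≤ n.choose i := by positivity
          nlinarith
      _ ≤ _ := by
          apply Finset.sum_le_sum_of_subset_of_nonneg
          · intro i hi
            have := Finset.mem_Iic.1 hi
            rw [Finset.mem_range]; omega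
          · intros; positivity
  have h2 : ∑ i ∈ Finset.range (n + 1), (n.choose i : ℝ) * Real.exp (l * (k - i)) =
      Real.exp (-l * t) * (2 * Real.cosh (l / 2)) ^ n := by
    have e : 2 * Real.cosh (l / 2) = Real.exp (-(l / 2)) + Real.exp (l / 2) := by
      rw [Real.cosh_eq]; ring
    rw [e, add_pow, Finset.mul_sum]
    apply Finset.sum_congr rfl
    intro i hi
    have hin : i ≤ n := by have := Finset.mem_range.1 hi; omega
    rw [← Real.exp_nat_mul, ← Real.exp_nat_mul, ← mul_assoc, ← mul_assoc, ← Real.exp_add,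
      ← Real.exp_add, mul_comm, Nat.cast_sub hin]
    congr 2
    rw [ht]; ring
  rw [h2] at h1
  refine h1.trans ?_
  have h3 : (2 * Real.cosh (l / 2)) ^ n ≤ 2 ^ n * Real.exp (n * ((l / 2) ^ 2 / 2)) := by
    rw [mul_pow, Real.exp_nat_mul]
    have := Real.cosh_le_exp_half_sq (l / 2)
    have := (Real.cosh_pos (l / 2)).le
    gcongr
  calc _ ≤ Real.exp (-l * t) * (2 ^ n * Real.exp (n * ((l / 2) ^ 2 / 2))) := by gcongr
    _ = 2 ^ n * Real.exp (-l * t + n * ((l / 2) ^ 2 / 2)) := by rw [Real.exp_add]; ring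
    _ = _ := by
      congr 2
      rw [hl]; field_simp; ring

/-- **Injectivity of a random expansive ReLU layer at a given point.**
For positive integers `k, n` with `n ≥ (21/10)·k`, a fixed `z* ∈ ℝ^k`, and `W` a random
`n×k` matrix with i.i.d. standard Gaussian entries, with probability at least
`1 − exp(−2(n/2 − k)²/n)` every `z ∈ ℝ^k` with `ReLU(Wz) = ReLU(Wz*)` satisfies
`z = z*`. -/
theorem random_relu_layer_injective_at_point
    (n k : ℕ) (hk : 0 < k) (hn : 21 * k ≤ 10 * n) (zstar : Fin k → ℝ) :
    1 - ENNReal.ofReal (Real.exp (-2 * ((n : ℝ) / 2 - (k : ℝ)) ^ 2 / (n : ℝ))) ≤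
      stdGaussianMatrix n k
        {W | ∀ z : Fin k → ℝ,
          (∀ i, relu ((Matrix.of W).mulVec z i) = relu ((Matrix.of W).mulVec zstar i)) →
            z = zstar} := by
  classical
  have hn0 : 0 < n := by omega
  set μ := stdGaussianMatrix n k with hμ
  have : IsProbabilityMeasure μ := by rw [hμ]; unfold stdGaussianMatrix; infer_instance
  change _ ≤ μ {W | ReluGood zstar W}
  set G := {W : Fin n → Fin k → ℝ | ReluGood zstar W} with hG
  set G' := toMeasurable μ G with hG'
  have hG'm : MeasurableSet G' := measurableSet_toMeasurable μ G
  have hGG : G ⊆ G' := subset_toMeasurable μ G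
  rw [← measure_toMeasurable G, ← hG']
  set M : ℕ := ∑ i ∈ Finset.Iic k, n.choose i with hM
  have hgp : ∀ᵐ W ∂μ, ∀ T : Finset (Fin n), T.card ≤ k → LinearIndepOn ℝ W (T : Set (Fin n)) := by
    rw [ae_all_iff]
    intro T
    by_cases hT : T.card ≤ k
    · filter_upwards [ae_linearIndepOn n k T hT] with W hW _ using hW
    · exact Filter.Eventually.of_forall fun W h => (hT h).elim
  have hcount : ∀ᵐ W ∂μ, (2 : ENNReal) ^ n ≤
      M + ∑ A : Finset (Fin n), (rowFlip A ⁻¹' G').indicator (fun _ => (1 : ENNReal)) W := by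
    filter_upwards [hgp] with W hW
    set 𝒜 : Finset (Finset (Fin n)) :=
      Finset.univ.filter (fun A => ¬ ReluGood zstar (rowFlip A W)) with h𝒜
    have hc : 𝒜.card ≤ M := by
      refine 𝒜.card_le_card_shatterer.trans (Finset.card_shatterer_le_sum_vcDim.trans ?_)
      rw [hM, Fintype.card_fin]
      apply Finset.sum_le_sum_of_subset
      apply Finset.Iic_subset_Iic.2
      refine Finset.sup_le fun S hS => ?_
      exact shatter_bound zstar W hW 𝒜 (fun A hA => (Finset.mem_filter.1 hA).2) S
        (Finset.mem_shatterer.1 hS)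
    have hsplit := Finset.card_filter_add_card_filter_not (s := (Finset.univ : Finset (Finset (Fin n))))
      (fun A => ReluGood zstar (rowFlip A W))
    rw [Finset.card_univ, Fintype.card_finset, Fintype.card_fin, ← h𝒜] at hsplit
    have hsum : ((Finset.univ.filter (fun A => ReluGood zstar (rowFlip A W))).card : ENNReal) ≤
        ∑ A : Finset (Fin n), (rowFlip A ⁻¹' G').indicator (fun _ => (1 : ENNReal)) W := by
      rw [Finset.card_filter]
      push_cast
      apply Finset.sum_le_sum
      intro A _
      by_cases hA : ReluGood zstar (rowFlip A W)
      · have : W ∈ rowFlip A ⁻¹' G' := hGG hA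
        rw [Set.indicator_of_mem this, if_pos hA]
      · simp [hA]
    calc (2 : ENNReal) ^ n = ((2 ^ n : ℕ) : ENNReal) := by push_cast; rfl
      _ = (𝒜.card : ENNReal) + ((Finset.univ.filter (fun A => ReluGood zstar (rowFlip A W))).card : ENNReal) := by
        rw [← hsplit]; push_cast; rw [add_comm]
      _ ≤ _ := by gcongr
  have hint : (2 : ENNReal) ^ n ≤ M + 2 ^ n * μ G' := by
    have h1 := lintegral_mono_ae hcount
    have hmi : ∀ A : Finset (Fin n), MeasurableSet (rowFlip (k := k) A ⁻¹' G') :=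
      fun A => (rowFlip_measurePreserving A).measurable hG'm
    rw [lintegral_const, lintegral_add_left measurable_const, lintegral_const,
      lintegral_finsetSum _ (fun A _ => measurable_const.indicator (hmi A))] at h1
    simp only [measure_univ, mul_one] at h1
    have h2 : ∀ A : Finset (Fin n),
        ∫⁻ W, (rowFlip (k := k) A ⁻¹' G').indicator (fun _ => (1 : ENNReal)) W ∂μ = μ G' := by
      intro A
      rw [lintegral_indicator_const (hmi A), one_mul]
      exact (rowFlip_measurePreserving A).measure_preimage hG'm.nullMeasurableSet
    simpa [h2, Fintype.card_finset] using h1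
  have hch := chernoff_sum n k hn0 (by omega)
  rw [← hM] at hch
  set e := Real.exp (-2 * ((n : ℝ) / 2 - (k : ℝ)) ^ 2 / (n : ℝ)) with he
  have hMe : (M : ENNReal) ≤ 2 ^ n * ENNReal.ofReal e := by
    rw [← ENNReal.ofReal_natCast]
    refine (ENNReal.ofReal_le_ofReal hch).trans (le_of_eq ?_)
    rw [ENNReal.ofReal_mul (by positivity), ENNReal.ofReal_pow (by norm_num)]
    norm_num
  rw [tsub_le_iff_left]
  have hfin : (2 : ENNReal) ^ n * 1 ≤ 2 ^ n * (ENNReal.ofReal e + μ G') := by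
    rw [mul_one, mul_add]
    exact hint.trans (by gcongr)
  exact (ENNReal.mul_le_mul_iff_right (by positivity) (by simp)).1 hfin
end

section
/- (Exact recovery for expansive random ReLU networks.) There exist absolute constants c > 0 and C > 0 with the following property. Let d ≥ 1 and let n₀ = k, n₁, …, n_d be positive integers with n_i ≥ (21/10)·n_{i−1} for every i ∈ {1,…,d}. Let W₁,…,W_d be independent random matrices, where W_i ∈ ℝ^{n_i × n_{i−1}} has i.i.d. standard Gaussian entries, and let G(z) = ReLU(W_d · ReLU(W_{d−1} ⋯ ReLU(W₁ z) ⋯ )). Then for any fixed z* ∈ ℝ^k, with probability at least 1 − C·exp(−c·k) over the draw of the weights, every z ∈ ℝ^k with G(z) = G(z*) satisfies z = z*, and moreover every intermediate layer map is invertible at the corresponding intermediate activation, so z* can be obtained from x = G(z*) by solving d layer-wise linear systems. -/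
open MeasureTheory ProbabilityTheory

/-- The joint law of `d` independent Gaussian weight matrices, where the `i`-th matrix
has shape `n (i+1) × n i`. -/
noncomputable def netGaussian (d : ℕ) (n : ℕ → ℕ) :
    Measure (∀ i : Fin d, Fin (n (i.1 + 1)) → Fin (n i.1) → ℝ) :=
  Measure.pi fun i : Fin d => stdGaussianMatrix (n (i.1 + 1)) (n i.1)

/-- Extend a `Fin d`-indexed family of weight matrices to an `ℕ`-indexed family
(by zero beyond `d`). -/
noncomputable def extendW (d : ℕ) (n : ℕ → ℕ)
    (W' : ∀ i : Fin d, Fin (n (i.1 + 1)) → Fin (n i.1) → ℝ) :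
    ∀ i : ℕ, Fin (n (i + 1)) → Fin (n i) → ℝ :=
  fun i => if h : i < d then W' ⟨i, h⟩ else 0

/-- The output of the first `j` ReLU layers of the network with weights `W` on input `z`:
`layerOut n W 0 z = z` and `layerOut n W (j+1) z = ReLU(W_j · layerOut n W j z)`. -/
noncomputable def layerOut (n : ℕ → ℕ) (W : ∀ i : ℕ, Fin (n (i + 1)) → Fin (n i) → ℝ) :
    (j : ℕ) → (Fin (n 0) → ℝ) → Fin (n j) → ℝ
  | 0, z => z
  | j + 1, z => fun i => relu ((Matrix.of (W j)).mulVec (layerOut n W j z) i)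


lemma pi_ac {α : Type*} [MeasurableSpace α] (μ ν : Measure α) [SigmaFinite μ] [SigmaFinite ν]
    (h : μ ≪ ν) : ∀ n : ℕ, Measure.pi (fun _ : Fin n => μ) ≪ Measure.pi (fun _ : Fin n => ν) := by
  intro n
  induction n with
  | zero =>
    rw [Measure.pi_of_empty (fun _ : Fin 0 => μ), Measure.pi_of_empty (fun _ : Fin 0 => ν)]
  | succ n ih =>
    have h1 := (measurePreserving_piFinSuccAbove (fun _ : Fin (n+1) => μ) 0).symm.map_eq
    have h2 := (measurePreserving_piFinSuccAbove (fun _ : Fin (n+1) => ν) 0).symm.map_eq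
    rw [← h1, ← h2]
    exact (h.prod ih).map (MeasurableEquiv.measurable _)

instance (n k : ℕ) : IsProbabilityMeasure (stdGaussianMatrix n k) := by
  unfold stdGaussianMatrix; infer_instance

lemma std_ac (n k : ℕ) : stdGaussianMatrix n k ≪ volume := by
  have h1 : Measure.pi (fun _ : Fin k => gaussianReal 0 1) ≪ (volume : Measure (Fin k → ℝ)) :=
    pi_ac _ _ (gaussianReal_absolutelyContinuous 0 one_ne_zero) k
  exact pi_ac _ _ h1 n

lemma ae_line (n k : ℕ) (P : Fin n → Fin k → ℝ) (s : Set (Fin n → Fin k → ℝ))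
    (hs : MeasurableSet s) (h : ∀ M, {t : ℝ | M + t • P ∉ s}.Finite) :
    ∀ᵐ M ∂(stdGaussianMatrix n k), M ∈ s := by
  apply (std_ac n k).ae_le
  apply ae_mem_of_ae_add_linearMap_mem (LinearMap.toSpanSingleton ℝ _ P) (volume : Measure ℝ) volume hs
  intro y
  exact (h y).measure_zero _

/-- general position -/
def GP {n k : ℕ} (M : Fin n → Fin k → ℝ) : Prop :=
  ∀ f : Fin k ↪ Fin n, ((Matrix.of M).submatrix f id).det ≠ 0

lemma GP_meas (n k : ℕ) : MeasurableSet {M : Fin n → Fin k → ℝ | GP M} := by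
  have : {M : Fin n → Fin k → ℝ | GP M} =
      ⋂ f : Fin k ↪ Fin n, {M | ((Matrix.of M).submatrix f id).det ≠ 0} := by
    ext; simp [GP]
  rw [this]
  refine MeasurableSet.iInter fun f => ?_
  have : Continuous fun M : Fin n → Fin k → ℝ => ((Matrix.of M).submatrix f id).det := by
    apply Continuous.matrix_det
    refine continuous_matrix fun i j => ?_
    simp; fun_prop
  exact (this.measurable (measurableSet_singleton 0)).compl

lemma GP_ae (n k : ℕ) : ∀ᵐ M ∂(stdGaussianMatrix n k), GP M := by
  unfold GP
  rw [ae_all_iff]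
  intro f
  refine ae_line n k (fun i j => if i = f j then 1 else 0) {M | ((Matrix.of M).submatrix f id).det ≠ 0} ?_ ?_
  · have : Continuous fun M : Fin n → Fin k → ℝ => ((Matrix.of M).submatrix f id).det := by
      apply Continuous.matrix_det
      refine continuous_matrix fun i j => ?_
      simp; fun_prop
    exact (this.measurable (measurableSet_singleton 0)).compl
  · intro M
    set A := (Matrix.of M).submatrix f id with hA
    refine ((-A).charpoly.roots.toFinset.finite_toSet).subset ?_
    intro t ht
    simp only [Set.mem_ofPred_eq, not_not] at ht
    simp only [Finset.mem_coe, Multiset.mem_toFinset]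
    rw [Polynomial.mem_roots (Matrix.charpoly_monic _).ne_zero, Polynomial.IsRoot,
      Matrix.eval_charpoly, ← ht]
    congr 1
    ext i j
    simp [hA, Matrix.scalar_apply, Matrix.diagonal_apply]
    split_ifs <;> ring

lemma ne_ae (n k : ℕ) (y : Fin k → ℝ) (hy : y ≠ 0) :
    ∀ᵐ M ∂(stdGaussianMatrix n k), ∀ j, (Matrix.of M).mulVec y j ≠ 0 := by
  rw [ae_all_iff]
  intro j
  refine ae_line n k (fun i l => if i = j then y l else 0) {M | (Matrix.of M).mulVec y j ≠ 0} ?_ ?_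
  · have : Continuous fun M : Fin n → Fin k → ℝ => (Matrix.of M).mulVec y j := by
      simp only [Matrix.mulVec, dotProduct, Matrix.of_apply]; fun_prop
    exact (this.measurable (measurableSet_singleton 0)).compl
  · intro M
    apply Set.Subsingleton.finite
    have hp : y ⬝ᵥ y ≠ 0 := by simpa [dotProduct_self_eq_zero] using hy
    have key : ∀ t : ℝ, (Matrix.of (M + t • (fun i l => if i = j then y l else 0))).mulVec y j
        = (Matrix.of M).mulVec y j + t * (y ⬝ᵥ y) := by
      intro t
      simp [Matrix.mulVec, dotProduct, add_mul, Finset.sum_add_distrib, Finset.mul_sum, mul_assoc]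
    intro s hs t ht
    simp only [Set.mem_ofPred_eq, not_not] at hs ht
    rw [key] at hs ht
    have : (s - t) * (y ⬝ᵥ y) = 0 := by linarith
    rcases mul_eq_zero.1 this with h | h
    · linarith
    · exact absurd h hp

lemma exists_emb {n k : ℕ} (V : Finset (Fin n)) (h : V.card = k) :
    ∃ f : Fin k ↪ Fin n, ∀ j, j ∈ V ↔ ∃ i, f i = j := by
  refine ⟨(V.orderEmbOfFin h).toEmbedding, fun j => ?_⟩
  have := V.range_orderEmbOfFin h
  rw [← Finset.mem_coe, ← this]
  exact Iff.rfl

lemma GP_inj {n k : ℕ} {M : Fin n → Fin k → ℝ} (hM : GP M) (S : Finset (Fin n))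
    (hS : k ≤ S.card) (y : Fin k → ℝ) (hy : ∀ j ∈ S, (Matrix.of M).mulVec y j = 0) : y = 0 := by
  obtain ⟨V, hVS, hV⟩ := Finset.exists_subset_card_eq hS
  obtain ⟨f, hf⟩ := exists_emb V hV
  refine Matrix.eq_zero_of_mulVec_eq_zero (hM f) ?_
  ext i
  exact hy (f i) (hVS ((hf _).2 ⟨i, rfl⟩))

lemma GP_indep {n k : ℕ} {M : Fin n → Fin k → ℝ} (hM : GP M) (hkn : k ≤ n) (a : Fin n → ℝ)
    (hc : (Finset.univ.filter (fun j => a j ≠ 0)).card ≤ k)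
    (ha : ∀ l, ∑ j, a j * M j l = 0) : a = 0 := by
  obtain ⟨V, hUV, hV⟩ := Finset.exists_superset_card_eq hc (by simpa using hkn)
  obtain ⟨f, hf⟩ := exists_emb V hV
  have h0 : ∀ j, j ∉ V → a j = 0 := fun j hj => by
    by_contra h
    exact hj (hUV (by simpa using h))
  have : (fun i => a (f i)) = 0 := by
    refine Matrix.eq_zero_of_vecMul_eq_zero (hM f) ?_
    ext l
    simp only [Matrix.vecMul, dotProduct, Matrix.submatrix_apply, Matrix.of_apply, id,
      Pi.zero_apply]
    rw [← ha l]
    have hVm : V = Finset.univ.map f := by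
      ext j; simp [hf]
    rw [← Finset.sum_map Finset.univ f (fun j => a j * M j l), ← hVm]
    refine Finset.sum_subset (Finset.subset_univ _) fun j _ hj => ?_
    simp [h0 j hj]
  ext j
  by_cases hj : j ∈ V
  · obtain ⟨i, rfl⟩ := (hf j).1 hj
    exact congrFun this i
  · exact h0 j hj

lemma exists_rel {n k : ℕ} (M : Fin n → Fin k → ℝ) (T : Finset (Fin n)) (hT : k < T.card) :
    ∃ a : Fin n → ℝ, a ≠ 0 ∧ (∀ j ∉ T, a j = 0) ∧ ∀ l, ∑ j, a j * M j l = 0 := by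
  let B : Matrix T (Fin k) ℝ := fun j l => M j l
  have hk : LinearMap.ker B.vecMulLinear ≠ ⊥ := by
    apply LinearMap.ker_ne_bot_of_finrank_lt
    simpa using hT
  obtain ⟨b, hb, hb0⟩ := Submodule.exists_mem_ne_zero_of_ne_bot hk
  refine ⟨fun j => if h : j ∈ T then b ⟨j, h⟩ else 0, ?_, ?_, ?_⟩
  · intro h
    apply hb0
    ext j
    simpa using congrFun h j.1
  · intro j hj; simp [hj]
  · intro l
    have := congrFun (LinearMap.mem_ker.1 hb) l
    simp only [Matrix.vecMulLinear_apply, Matrix.vecMul, dotProduct, Pi.zero_apply] at this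
    refine Eq.trans ?_ this
    rw [← Finset.sum_subset (Finset.subset_univ T), ← Finset.sum_coe_sort]
    · refine Finset.sum_congr rfl fun j _ => ?_
      simp [B]
    · intro j _ hj; simp [hj]

/-- sign pattern -/
noncomputable def sgn {n : ℕ} (A : Finset (Fin n)) (j : Fin n) : ℝ := if j ∈ A then -1 else 1

noncomputable def flipM {n k : ℕ} (A : Finset (Fin n)) (M : Fin n → Fin k → ℝ) : Fin n → Fin k → ℝ :=
  fun i j => sgn A i * M i j

lemma flip_mulVec {n k : ℕ} (A : Finset (Fin n)) (M : Fin n → Fin k → ℝ) (y : Fin k → ℝ) (j : Fin n) :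
    (Matrix.of (flipM A M)).mulVec y j = sgn A j * (Matrix.of M).mulVec y j := by
  simp [Matrix.mulVec, dotProduct, flipM, Finset.mul_sum, mul_assoc]

lemma flip_mp (n k : ℕ) (A : Finset (Fin n)) :
    MeasurePreserving (flipM A) (stdGaussianMatrix n k) (stdGaussianMatrix n k) := by
  unfold stdGaussianMatrix
  refine measurePreserving_pi _ _ (f := fun i (v : Fin k → ℝ) l => sgn A i * v l) fun i => ?_
  refine measurePreserving_pi _ _ (f := fun l (x : ℝ) => sgn A i * x) fun l => ?_
  unfold sgn
  split_ifs
  · refine ⟨by fun_prop, ?_⟩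
    have := gaussianReal_map_neg (μ := 0) (v := 1)
    simpa using this
  · simp only [one_mul]; exact MeasurePreserving.id _

open Classical in
lemma symm_bound (n k : ℕ) (B : Set (Fin n → Fin k → ℝ)) (hB : MeasurableSet B) (N : ℕ)
    (h : ∀ᵐ M ∂(stdGaussianMatrix n k),
      (Finset.univ.filter (fun A : Finset (Fin n) => flipM A M ∈ B)).card ≤ N) :
    stdGaussianMatrix n k B * 2 ^ n ≤ N := by
  have h1 : ∀ A : Finset (Fin n), ∫⁻ M, B.indicator 1 (flipM A M) ∂(stdGaussianMatrix n k)
      = stdGaussianMatrix n k B := by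
    intro A
    rw [(flip_mp n k A).lintegral_comp (measurable_one.indicator hB), lintegral_indicator_one hB]
  calc stdGaussianMatrix n k B * 2 ^ n
      = ∑ A : Finset (Fin n), ∫⁻ M, B.indicator 1 (flipM A M) ∂(stdGaussianMatrix n k) := by
        simp [h1, mul_comm]
    _ = ∫⁻ M, ∑ A : Finset (Fin n), B.indicator 1 (flipM A M) ∂(stdGaussianMatrix n k) := by
        rw [lintegral_finsetSum]
        intro A _
        exact (measurable_one.indicator hB).comp (flip_mp n k A).measurable
    _ ≤ ∫⁻ M, (N : ENNReal) ∂(stdGaussianMatrix n k) := by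
        apply lintegral_mono_ae
        filter_upwards [h] with M hM
        simp only [Set.indicator_apply, Pi.one_apply, Finset.sum_boole]
        exact_mod_cast hM
    _ = N := by simp

open Classical in
lemma count_pos {n k : ℕ} (v : Fin n → ℝ) (hv : ∀ j, v j ≠ 0) :
    (Finset.univ.filter (fun A : Finset (Fin n) =>
      (Finset.univ.filter (fun j => 0 < sgn A j * v j)).card ≤ k)).card
      ≤ ∑ i ∈ Finset.Iic k, n.choose i := by
  have hcard : ((Finset.Iic k).biUnion fun i => Finset.powersetCard i (Finset.univ : Finset (Fin n))).card
      ≤ ∑ i ∈ Finset.Iic k, n.choose i := by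
    refine Finset.card_biUnion_le.trans ?_
    simp
  refine le_trans ?_ hcard
  refine Finset.card_le_card_of_injOn (fun A => Finset.univ.filter (fun j => 0 < sgn A j * v j)) ?_ ?_
  · intro A hA
    simpa using hA
  · intro A _ B _ hAB
    ext j
    have := Finset.ext_iff.1 hAB j
    simp only [sgn] at this
    rcases lt_or_gt_of_ne (hv j) with h | h
    · have h' := h.le
      by_cases h1 : j ∈ A <;> by_cases h2 : j ∈ B <;> simp_all
      linarith
      linarith
    · have h' := h.le
      by_cases h1 : j ∈ A <;> by_cases h2 : j ∈ B <;> simp_all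
      linarith
      linarith

open Classical in
lemma count_cone {n k : ℕ} (hkn : k ≤ n) (M : Fin n → Fin k → ℝ) (hM : GP M) :
    (Finset.univ.filter (fun A : Finset (Fin n) =>
      ∃ y : Fin k → ℝ, y ≠ 0 ∧ ∀ j, sgn A j * (Matrix.of M).mulVec y j ≤ 0)).card
      ≤ ∑ i ∈ Finset.Iic k, n.choose i := by
  set F := Finset.univ.filter (fun A : Finset (Fin n) =>
      ∃ y : Fin k → ℝ, y ≠ 0 ∧ ∀ j, sgn A j * (Matrix.of M).mulVec y j ≤ 0) with hF
  have hvc : F.vcDim ≤ k := by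
    refine Finset.sup_le fun T hT => ?_
    rw [Finset.mem_shatterer] at hT
    by_contra! hk
    obtain ⟨a, ha0, haT, ha⟩ := exists_rel M T hk
    have hsub : T.filter (fun j => 0 < a j) ⊆ T := Finset.filter_subset _ _
    -- want sgn A j * a j ≤ 0, so that a j * v j ≥ 0
    obtain ⟨A, hA, hAT⟩ := hT hsub
    simp only [hF, Finset.mem_filter, Finset.mem_univ, true_and] at hA
    obtain ⟨y, hy0, hy⟩ := hA
    set v := (Matrix.of M).mulVec y with hv
    have hnn : ∀ j, 0 ≤ a j * v j := by
      intro j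
      by_cases hj : j ∈ T
      · have h1 : j ∈ A ↔ 0 < a j := by
          have := Finset.ext_iff.1 hAT j
          simpa [hj] using this
        have h2 := hy j
        unfold sgn at h2
        split_ifs at h2 with h3
        · exact mul_nonneg (h1.1 h3).le (by linarith)
        · exact mul_nonneg_of_nonpos_of_nonpos (not_lt.1 (fun h => h3 (h1.2 h))) (by linarith)
      · simp [haT j hj]
    have hsum : ∑ j, a j * v j = 0 := by
      simp only [hv, Matrix.mulVec, dotProduct, Matrix.of_apply, Finset.mul_sum]
      rw [Finset.sum_comm]
      refine Finset.sum_eq_zero fun l _ => ?_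
      have : ∑ j, a j * (M j l * y l) = (∑ j, a j * M j l) * y l := by
        rw [Finset.sum_mul]; simp [mul_assoc]
      rw [this, ha l, zero_mul]
    have hz := (Finset.sum_eq_zero_iff_of_nonneg (fun j _ => hnn j)).1 hsum
    have hcard : k ≤ (Finset.univ.filter (fun j => a j ≠ 0)).card := by
      by_contra! h
      exact ha0 (GP_indep hM hkn a h.le ha)
    apply hy0
    refine GP_inj hM _ hcard y fun j hj => ?_
    have := hz j (Finset.mem_univ _)
    rcases mul_eq_zero.1 this with h | h
    · simp [h] at hj
    · exact h
  calc F.card ≤ F.shatterer.card := F.card_le_card_shatterer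
    _ ≤ ∑ i ∈ Finset.Iic F.vcDim, (Fintype.card (Fin n)).choose i := Finset.card_shatterer_le_sum_vcDim
    _ ≤ _ := by
      rw [Fintype.card_fin]
      exact Finset.sum_le_sum_of_subset (Finset.Iic_subset_Iic.2 hvc)

/-- cone event -/
def coneSet (n k : ℕ) : Set (Fin n → Fin k → ℝ) :=
  {M | ∃ y : Fin k → ℝ, y ≠ 0 ∧ ∀ j, (Matrix.of M).mulVec y j ≤ 0}

lemma coneSet_meas (n k : ℕ) : MeasurableSet (coneSet n k) := by
  have hcl : IsClosed {p : (Fin n → Fin k → ℝ) × Metric.sphere (0 : Fin k → ℝ) 1 |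
      ∀ j, (Matrix.of p.1).mulVec p.2.1 j ≤ 0} := by
    simp only [Set.ofPred_forall]
    refine isClosed_iInter fun j => ?_
    refine isClosed_le ?_ continuous_const
    simp only [Matrix.mulVec, dotProduct, Matrix.of_apply]
    refine continuous_finsetSum _ fun i _ => Continuous.mul (by fun_prop) ?_
    exact (continuous_apply i).comp (continuous_subtype_val.comp continuous_snd)
  have : coneSet n k = Prod.fst '' {p : (Fin n → Fin k → ℝ) × Metric.sphere (0 : Fin k → ℝ) 1 |
      ∀ j, (Matrix.of p.1).mulVec p.2.1 j ≤ 0} := by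
    ext M
    constructor
    · rintro ⟨y, hy, h⟩
      have hn : 0 < ‖y‖ := norm_pos_iff.2 hy
      refine ⟨(M, ⟨‖y‖⁻¹ • y, ?_⟩), ?_, rfl⟩
      · simp [norm_smul, hn.ne']
      · intro j
        show (Matrix.of M).mulVec (‖y‖⁻¹ • y) j ≤ 0
        rw [Matrix.mulVec_smul]
        simp only [Pi.smul_apply, smul_eq_mul]
        exact mul_nonpos_of_nonneg_of_nonpos (by positivity) (h j)
    · rintro ⟨⟨M', y⟩, h, rfl⟩
      refine ⟨y.1, ?_, h⟩
      intro h0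
      have := y.2
      rw [h0] at this
      simp at this
  rw [this]
  exact (isClosedMap_fst_of_compactSpace _ hcl).measurableSet

open Classical in
def badSet (n k : ℕ) : Set ((Fin n → Fin k → ℝ) × (Fin k → ℝ)) :=
  {p | ¬ GP p.1 ∨
    (p.2 ≠ 0 ∧ (Finset.univ.filter (fun j => 0 < (Matrix.of p.1).mulVec p.2 j)).card ≤ k) ∨
    (p.2 = 0 ∧ p.1 ∈ coneSet n k)}

lemma badSet_meas (n k : ℕ) : MeasurableSet (badSet n k) := by
  classical
  have h1 : MeasurableSet {p : (Fin n → Fin k → ℝ) × (Fin k → ℝ) | ¬ GP p.1} :=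
    (measurable_fst (GP_meas n k)).compl
  have h2 : MeasurableSet {p : (Fin n → Fin k → ℝ) × (Fin k → ℝ) | p.2 = 0} :=
    measurable_snd (measurableSet_singleton 0)
  have h3 : MeasurableSet {p : (Fin n → Fin k → ℝ) × (Fin k → ℝ) | p.1 ∈ coneSet n k} :=
    measurable_fst (coneSet_meas n k)
  have h4 : MeasurableSet {p : (Fin n → Fin k → ℝ) × (Fin k → ℝ) |
      (Finset.univ.filter (fun j => 0 < (Matrix.of p.1).mulVec p.2 j)).card ≤ k} := by
    simp only [Finset.card_filter]
    refine measurableSet_le ?_ measurable_const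
    refine Finset.measurable_sum _ fun j _ => ?_
    refine Measurable.ite ?_ measurable_const measurable_const
    refine measurableSet_lt measurable_const ?_
    simp only [Matrix.mulVec, dotProduct, Matrix.of_apply]
    fun_prop
  have := h1.union ((h2.compl.inter h4).union (h2.inter h3))
  convert this using 1
  ext p
  simp only [badSet, Set.mem_union, Set.mem_inter_iff, Set.mem_compl_iff, Set.mem_ofPred_eq, ne_eq]

lemma relu_pos {a b : ℝ} (h : relu a = relu b) (hb : 0 < b) : a = b := by
  unfold relu at h
  rw [max_eq_left hb.le] at h
  rcases max_choice a 0 with h1 | h1 <;> linarith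

lemma good_inj {n k : ℕ} {M : Fin n → Fin k → ℝ} {y : Fin k → ℝ} (h : (M, y) ∉ badSet n k)
    (z : Fin k → ℝ)
    (hz : ∀ j, relu ((Matrix.of M).mulVec z j) = relu ((Matrix.of M).mulVec y j)) : z = y := by
  classical
  simp only [badSet, Set.mem_ofPred_eq, not_or, not_not, not_and, not_le] at h
  obtain ⟨hG, h1, h2⟩ := h
  by_cases hy : y = 0
  · subst hy
    by_contra hne
    refine h2 rfl ⟨z, hne, fun j => ?_⟩
    have := hz j
    simp only [Matrix.mulVec_zero, Pi.zero_apply, relu, max_self] at this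
    exact max_eq_right_iff.1 this
  · have h3 := h1 hy
    rw [← sub_eq_zero]
    refine GP_inj hG (Finset.univ.filter (fun j => 0 < (Matrix.of M).mulVec y j)) ?_ _ ?_
    · refine le_trans h3.le (le_of_eq ?_)
      congr
    · intro j hj
      rw [Matrix.mulVec_sub, Pi.sub_apply, sub_eq_zero]
      exact relu_pos (hz j) (by simpa using hj)

noncomputable def rr : ℝ := (11/10)^10 * (21/22)^21
noncomputable def cc : ℝ := - Real.log rr / 21

lemma rr_pos : 0 < rr := by unfold rr; positivity
lemma cc_pos : 0 < cc := by
  have : Real.log rr < 0 := Real.log_neg rr_pos (by unfold rr; norm_num)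
  unfold cc; linarith

lemma tail_bound (n k : ℕ) (h : 21 * k ≤ 10 * n) :
    ((∑ i ∈ Finset.Iic k, n.choose i : ℕ) : ℝ) ≤ Real.exp (-cc * n) * 2 ^ n := by
  have h1 : ((∑ i ∈ Finset.Iic k, n.choose i : ℕ) : ℝ) * (10/11)^k ≤ (21/11)^n := by
    have : (21/11 : ℝ)^n = ∑ i ∈ Finset.range (n+1), (10/11 : ℝ)^i * (n.choose i : ℝ) := by
      rw [show (21/11 : ℝ) = 10/11 + 1 by norm_num, add_pow]; simp
    rw [this, Nat.cast_sum, Finset.sum_mul]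
    refine le_trans ?_ (Finset.sum_le_sum_of_subset_of_nonneg (s := Finset.Iic k) ?_ ?_)
    · refine Finset.sum_le_sum fun i hi => ?_
      rw [mul_comm]
      have : (10/11 : ℝ)^k ≤ (10/11)^i :=
        pow_le_pow_of_le_one (by norm_num) (by norm_num) (Finset.mem_Iic.1 hi)
      gcongr
    · intro i hi
      simp at hi ⊢; omega
    · intros; positivity
  have h2 : (11/10 : ℝ)^k * (21/22)^n ≤ Real.exp (-cc * n) := by
    refine le_of_pow_le_pow_left₀ (n := 21) (by norm_num) (by positivity) ?_
    have e1 : Real.exp (-cc * n) ^ 21 = rr ^ n := by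
      rw [← Real.exp_nat_mul]
      have : ((21 : ℕ) : ℝ) * (-cc * n) = n * Real.log rr := by
        unfold cc; push_cast; ring
      rw [this, Real.exp_nat_mul, Real.exp_log rr_pos]
    rw [e1, rr, mul_pow, mul_pow, ← pow_mul, ← pow_mul, ← pow_mul, ← pow_mul, mul_comm n 21]
    have : (11/10 : ℝ) ^ (k * 21) ≤ (11/10) ^ (10 * n) :=
      pow_le_pow_right₀ (by norm_num) (by omega)
    exact mul_le_mul_of_nonneg_right this (by positivity)
  have h3 : ((∑ i ∈ Finset.Iic k, n.choose i : ℕ) : ℝ) ≤ (11/10)^k * (21/11)^n := by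
    have e : (11/10 : ℝ)^k * (10/11)^k = 1 := by rw [← mul_pow]; norm_num
    calc _ = (11/10 : ℝ)^k * (((∑ i ∈ Finset.Iic k, n.choose i : ℕ) : ℝ) * (10/11)^k) := by
          linear_combination (-((∑ i ∈ Finset.Iic k, n.choose i : ℕ) : ℝ)) * e
      _ ≤ _ := by gcongr
  calc _ ≤ _ := h3
    _ = ((11/10 : ℝ)^k * (21/22)^n) * 2 ^ n := by
      rw [mul_assoc, ← mul_pow]; norm_num
    _ ≤ _ := by gcongr

lemma tail_enn {n k : ℕ} (h : 21 * k ≤ 10 * n) {x : ENNReal}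
    (hx : x * 2 ^ n ≤ ((∑ i ∈ Finset.Iic k, n.choose i : ℕ) : ENNReal)) :
    x ≤ ENNReal.ofReal (Real.exp (-cc * n)) := by
  have h2 : x * 2 ^ n ≤ ENNReal.ofReal (Real.exp (-cc * n)) * 2 ^ n := by
    refine hx.trans ?_
    have : (2 : ENNReal) ^ n = ENNReal.ofReal (2 ^ n) := by
      rw [ENNReal.ofReal_pow (by norm_num)]; simp
    rw [this, ← ENNReal.ofReal_mul (by positivity), ← ENNReal.ofReal_natCast]
    exact ENNReal.ofReal_le_ofReal (tail_bound n k h)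
  exact (ENNReal.mul_le_mul_iff_left (by simp) (by finiteness)).1 h2

lemma layer_bound (n k : ℕ) (h : 21 * k ≤ 10 * n) (y : Fin k → ℝ) :
    stdGaussianMatrix n k {M | (M, y) ∈ badSet n k} ≤ ENNReal.ofReal (Real.exp (-cc * n)) := by
  classical
  have hmeas : MeasurableSet {M | (M, y) ∈ badSet n k} :=
    (measurable_id.prodMk measurable_const) (badSet_meas n k)
  apply tail_enn h
  by_cases hy : y = 0
  · subst hy
    have hae : stdGaussianMatrix n k {M | (M, (0 : Fin k → ℝ)) ∈ badSet n k} ≤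
        stdGaussianMatrix n k (coneSet n k) := by
      apply measure_mono_ae
      filter_upwards [GP_ae n k] with M hM hb
      rcases hb with hb | hb | hb
      · exact absurd hM hb
      · exact absurd rfl hb.1
      · exact hb.2
    refine le_trans (mul_le_mul_left hae _) ?_
    refine symm_bound n k _ (coneSet_meas n k) _ ?_
    filter_upwards [GP_ae n k] with M hM
    refine le_trans (le_of_eq ?_) (count_cone (by omega) M hM)
    congr 1
    ext A
    simp [coneSet, flip_mulVec]
  · set D : Set (Fin n → Fin k → ℝ) := {M | (M, y) ∈ badSet n k} ∩ {M | GP M} with hD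
    have hae : stdGaussianMatrix n k {M | (M, y) ∈ badSet n k} ≤
        stdGaussianMatrix n k D := by
      apply measure_mono_ae
      filter_upwards [GP_ae n k] with M hM hb
      exact ⟨hb, hM⟩
    refine le_trans (mul_le_mul_left hae _) ?_
    refine symm_bound n k _ (hmeas.inter (GP_meas n k)) _ ?_
    filter_upwards [ne_ae n k y hy] with M hM
    refine le_trans (Finset.card_le_card ?_) (count_pos (k := k) _ hM)
    intro A hA
    simp only [Finset.mem_filter, Finset.mem_univ, true_and] at hA ⊢
    rcases hA with ⟨hb | hb | hb, hG⟩
    · exact absurd hG hb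
    · refine le_trans (le_of_eq ?_) hb.2
      congr 1
      ext j
      simp [flip_mulVec]
    · exact absurd hb.1 hy

lemma slice_bound {ι : Type*} [Fintype ι] [DecidableEq ι] {X : ι → Type*}
    [∀ i, MeasurableSpace (X i)] (μ : ∀ i, Measure (X i)) [∀ i, IsProbabilityMeasure (μ i)]
    (E : Set (∀ i, X i)) (hE : MeasurableSet E) (i : ι) (p : ENNReal)
    (h : ∀ x, μ i {m | Function.update x i m ∈ E} ≤ p) : Measure.pi μ E ≤ p := by
  have hne : Nonempty (∀ i, X i) := by
    exact nonempty_of_isProbabilityMeasure (Measure.pi μ)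
  obtain ⟨x⟩ := hne
  have hf : Measurable (E.indicator (1 : (∀ i, X i) → ENNReal)) := measurable_one.indicator hE
  rw [← lintegral_indicator_one hE, lintegral_eq_lmarginal_univ x,
    lmarginal_erase' _ hf (Finset.mem_univ i)]
  calc _ ≤ (∫⋯∫⁻_(Finset.univ.erase i), (fun _ => p) ∂μ) x := by
        apply lmarginal_mono
        intro y
        have : (fun m => E.indicator (1 : (∀ i, X i) → ENNReal) (Function.update y i m))
            = {m | Function.update y i m ∈ E}.indicator 1 := by
          rfl
        show ∫⁻ m, E.indicator (1 : (∀ i, X i) → ENNReal) (Function.update y i m) ∂μ i ≤ p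
        have hm : MeasurableSet {m | Function.update y i m ∈ E} := measurable_update y hE
        rw [this]
        exact (lintegral_indicator_one hm).le.trans (h y)
    _ = p := by simp [lmarginal]

lemma layerOut_congr (n : ℕ → ℕ) (W V : ∀ i : ℕ, Fin (n (i + 1)) → Fin (n i) → ℝ) (j : ℕ)
    (h : ∀ l < j, W l = V l) (z) : layerOut n W j z = layerOut n V j z := by
  induction j with
  | zero => rfl
  | succ j ih =>
    simp only [layerOut]
    rw [ih (fun l hl => h l (by omega)), h j (by omega)]

lemma extendW_meas (d : ℕ) (n : ℕ → ℕ) (i : ℕ) : Measurable fun W' => extendW d n W' i := by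
  unfold extendW
  split_ifs with h
  · exact measurable_pi_apply (⟨i, h⟩ : Fin d)
  · exact measurable_const

lemma layerOut_meas (d : ℕ) (n : ℕ → ℕ) (z) (j : ℕ) :
    Measurable fun W' => layerOut n (extendW d n W') j z := by
  induction j with
  | zero => exact measurable_const
  | succ j ih =>
    simp only [layerOut]
    refine measurable_pi_lambda _ fun i => ?_
    unfold relu
    refine Measurable.max ?_ measurable_const
    simp only [Matrix.mulVec, dotProduct, Matrix.of_apply]
    refine Finset.measurable_sum _ fun l _ => ?_
    refine Measurable.mul ?_ ((measurable_pi_apply l).comp ih)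
    exact (measurable_pi_apply l).comp ((measurable_pi_apply i).comp (extendW_meas d n j))

/-- bad event at layer i -/
def badLayer (d : ℕ) (n : ℕ → ℕ) (z : Fin (n 0) → ℝ) (i : ℕ) :
    Set (∀ i : Fin d, Fin (n (i.1 + 1)) → Fin (n i.1) → ℝ) :=
  {W' | (extendW d n W' i, layerOut n (extendW d n W') i z) ∈ badSet (n (i+1)) (n i)}

lemma badLayer_bound (d : ℕ) (n : ℕ → ℕ) (z) (i : ℕ) (hi : i < d) (h : 21 * n i ≤ 10 * n (i+1)) :
    netGaussian d n (badLayer d n z i) ≤ ENNReal.ofReal (Real.exp (-cc * n (i+1))) := by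
  unfold netGaussian
  refine slice_bound _ _ ?_ ⟨i, hi⟩ _ ?_
  · exact ((extendW_meas d n i).prodMk (layerOut_meas d n z i)) (badSet_meas _ _)
  · intro x
    refine le_trans (le_of_eq ?_) (layer_bound (n (i+1)) (n i) h (layerOut n (extendW d n x) i z))
    congr 1
    ext m
    have h1 : extendW d n (Function.update x ⟨i, hi⟩ m) i = m := by
      simp [extendW, hi]
    have h2 : layerOut n (extendW d n (Function.update x ⟨i, hi⟩ m)) i z
        = layerOut n (extendW d n x) i z := by
      apply layerOut_congr
      intro l hl
      have hld : l < d := by omega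
      simp only [extendW, hld, dif_pos]
      rw [Function.update_of_ne]
      simp only [ne_eq, Fin.mk.injEq]; omega
    simp only [badLayer, Set.mem_ofPred_eq, h1, h2]

lemma sizes (d : ℕ) (n : ℕ → ℕ) (hk : 0 < n 0) (h : ∀ i < d, 21 * n i ≤ 10 * n (i+1)) :
    ∀ i ≤ d, n 0 + i ≤ n i := by
  intro i
  induction i with
  | zero => simp
  | succ i ih =>
    intro hi
    have := ih (by omega)
    have := h i (by omega)
    omega

/-- **Exact recovery for expansive random ReLU networks.**
There are absolute constants `c, C > 0` such that: for any depth `d ≥ 1`, layer sizes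
`n₀ = k, n₁, …, n_d` with `n_i ≥ (21/10)·n_{i−1}`, independent i.i.d. standard Gaussian
weight matrices `W_i ∈ ℝ^{n_i × n_{i−1}}`, and any fixed `z* ∈ ℝ^k`, with probability at
least `1 − C·exp(−c·k)` the network `G(z) = ReLU(W_d ⋯ ReLU(W₁ z) ⋯)` satisfies
`G(z) = G(z*) → z = z*`, and every intermediate layer map is injective at the
corresponding intermediate activation. -/
theorem exact_recovery_expansive_random_relu_network :
    ∃ c C : ℝ, 0 < c ∧ 0 < C ∧
      ∀ (d : ℕ), 1 ≤ d → ∀ (n : ℕ → ℕ) (k : ℕ), n 0 = k → 0 < k →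
        (∀ i < d, 21 * n i ≤ 10 * n (i + 1)) →
        ∀ zstar : Fin (n 0) → ℝ,
          1 - ENNReal.ofReal (C * Real.exp (-c * (k : ℝ))) ≤
            netGaussian d n
              {W' | (∀ z : Fin (n 0) → ℝ,
                        layerOut n (extendW d n W') d z = layerOut n (extendW d n W') d zstar →
                          z = zstar) ∧
                    (∀ i < d, ∀ y : Fin (n i) → ℝ,
                      (∀ j, relu ((Matrix.of (extendW d n W' i)).mulVec y j) =
                            relu ((Matrix.of (extendW d n W' i)).mulVec
                              (layerOut n (extendW d n W') i zstar) j)) →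
                        y = layerOut n (extendW d n W') i zstar)} := by
  have hq : Real.exp (-cc) < 1 := by
    rw [Real.exp_lt_one_iff]; have := cc_pos; linarith
  have hq0 : 0 < Real.exp (-cc) := Real.exp_pos _
  refine ⟨cc, (1 - Real.exp (-cc))⁻¹, cc_pos, inv_pos.2 (by linarith), ?_⟩
  intro d hd n k hnk hk hexp zstar
  subst hnk
  have hprob : IsProbabilityMeasure (netGaussian d n) := by
    unfold netGaussian; infer_instance
  set G : Set (∀ i : Fin d, Fin (n (i.1 + 1)) → Fin (n i.1) → ℝ) := _
  show _ ≤ netGaussian d n G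
  set U : Set (∀ i : Fin d, Fin (n (i.1 + 1)) → Fin (n i.1) → ℝ) :=
    ⋃ i ∈ Finset.range d, badLayer d n zstar i with hU
  have hcov : Set.univ ⊆ G ∪ U := by
    intro W _
    by_cases hW : W ∈ U
    · exact Or.inr hW
    left
    have hgood : ∀ i < d, ∀ y : Fin (n i) → ℝ,
        (∀ j, relu ((Matrix.of (extendW d n W i)).mulVec y j) =
          relu ((Matrix.of (extendW d n W i)).mulVec (layerOut n (extendW d n W) i zstar) j)) →
        y = layerOut n (extendW d n W) i zstar := by
      intro i hi y hy
      refine good_inj (M := extendW d n W i) ?_ y hy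
      intro hb
      apply hW
      simp only [hU, Set.mem_iUnion]
      exact ⟨i, Finset.mem_range.2 hi, hb⟩
    refine ⟨?_, hgood⟩
    intro z hz
    have hdesc : ∀ j ≤ d, layerOut n (extendW d n W) j z = layerOut n (extendW d n W) j zstar →
        z = zstar := by
      intro j
      induction j with
      | zero => intro _ h; exact h
      | succ j ih =>
        intro hj h
        refine ih (by omega) (hgood j (by omega) _ fun l => ?_)
        exact congrFun h l
    exact hdesc d le_rfl hz
  have hUb : netGaussian d n U ≤
      ENNReal.ofReal ((1 - Real.exp (-cc))⁻¹ * Real.exp (-cc * (n 0 : ℝ))) := by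
    calc netGaussian d n U ≤ ∑ i ∈ Finset.range d, netGaussian d n (badLayer d n zstar i) :=
          measure_biUnion_finset_le _ _
      _ ≤ ∑ i ∈ Finset.range d,
          ENNReal.ofReal (Real.exp (-cc * (n 0 : ℝ)) * Real.exp (-cc) ^ i) := by
          refine Finset.sum_le_sum fun i hi => ?_
          have hi' := Finset.mem_range.1 hi
          refine (badLayer_bound d n zstar i hi' (hexp i hi')).trans ?_
          apply ENNReal.ofReal_le_ofReal
          rw [← Real.exp_nat_mul, ← Real.exp_add]
          apply Real.exp_le_exp.2
          have h1 : n 0 + i ≤ n (i+1) := by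
            have := sizes d n hk hexp (i+1) (by omega)
            omega
          have h2 : (n 0 : ℝ) + i ≤ n (i+1) := by exact_mod_cast h1
          have := cc_pos
          nlinarith
      _ = ENNReal.ofReal (∑ i ∈ Finset.range d,
            Real.exp (-cc * (n 0 : ℝ)) * Real.exp (-cc) ^ i) := by
          rw [ENNReal.ofReal_sum_of_nonneg]
          intros; positivity
      _ ≤ _ := by
          apply ENNReal.ofReal_le_ofReal
          rw [← Finset.mul_sum, mul_comm]
          refine mul_le_mul_of_nonneg_right ?_ (Real.exp_pos _).le
          rw [← tsum_geometric_of_lt_one hq0.le hq]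
          exact (summable_geometric_of_lt_one hq0.le hq).sum_le_tsum _ (fun _ _ => by positivity)
  rw [tsub_le_iff_right]
  calc (1 : ENNReal) = netGaussian d n Set.univ := by simp
    _ ≤ netGaussian d n (G ∪ U) := measure_mono hcov
    _ ≤ netGaussian d n G + netGaussian d n U := measure_union_le _ _
    _ ≤ _ := by gcongr
end

section
/- (Approximate inversion of a single noisy ReLU layer in ℓ∞.) Let W ∈ ℝ^{n×k} with rows w_1,…,w_n, let m > k be an integer and c > 0 a constant, and suppose W (m,c)-extends the ℓ∞ norm. Let z* ∈ ℝ^k, let e ∈ ℝ^n with ‖e‖_∞ ≤ ε, and set x = ReLU(Wz*) + e. Assume that ReLU(Wz*) has at least m coordinates strictly greater than 2ε. Then every z ∈ ℝ^k that is ε-feasible for (W, x) satisfies ‖z − z*‖_∞ ≤ 2ε/c. (In particular, z* itself is ε-feasible, so the feasible set is nonempty.) -/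
/-- `W` `(m,c)`-extends the `ℓ∞` norm: for every index set `I` with `|I| ≥ m` and every
`a ∈ ℝ^k`, `‖W_{I,:}a‖_∞ ≥ c‖a‖_∞` (here `‖a‖` is the sup norm on `Fin k → ℝ`, and the
left-hand sup over rows in `I` is expressed by an existential witness). -/
def ExtendsLinf {n k : ℕ} (W : Matrix (Fin n) (Fin k) ℝ) (m : ℕ) (c : ℝ) : Prop :=
  ∀ I : Finset (Fin n), m ≤ I.card → ∀ a : Fin k → ℝ, ∃ i ∈ I, c * ‖a‖ ≤ |W.mulVec a i|

/-- `z` is `δ`-feasible for `(W, y)`: `|w_j·z − y_j| ≤ δ` for every `j` with `y_j > δ`,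
and `w_j·z ≤ y_j + δ` for every `j` with `y_j ≤ δ`. -/
def InfFeasible {n k : ℕ} (W : Matrix (Fin n) (Fin k) ℝ) (y : Fin n → ℝ) (δ : ℝ)
    (z : Fin k → ℝ) : Prop :=
  ∀ j, (δ < y j → |W.mulVec z j - y j| ≤ δ) ∧ (y j ≤ δ → W.mulVec z j ≤ y j + δ)

/-- **Approximate inversion of a single noisy ReLU layer in `ℓ∞`.**
Suppose `W` `(m,c)`-extends the `ℓ∞` norm with `m > k`, `x = ReLU(Wz*) + e` with
`‖e‖_∞ ≤ ε`, and `ReLU(Wz*)` has at least `m` coordinates strictly greater than `2ε`.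
Then `z*` is `ε`-feasible for `(W,x)`, and every `ε`-feasible `z` satisfies
`‖z − z*‖_∞ ≤ 2ε/c`. -/
theorem single_layer_noisy_relu_linf_inversion
    (n k m : ℕ) (W : Matrix (Fin n) (Fin k) ℝ) (c ε : ℝ)
    (hc : 0 < c) (hm : k < m) (hext : ExtendsLinf W m c)
    (zstar : Fin k → ℝ) (e : Fin n → ℝ) (he : ‖e‖ ≤ ε)
    (x : Fin n → ℝ) (hx : x = fun j => relu (W.mulVec zstar j) + e j)
    (hbig : m ≤ (Finset.univ.filter fun j => 2 * ε < relu (W.mulVec zstar j)).card) :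
    InfFeasible W x ε zstar ∧
      ∀ z : Fin k → ℝ, InfFeasible W x ε z → ‖z - zstar‖ ≤ 2 * ε / c := by
  have hε : 0 ≤ ε := le_trans (norm_nonneg e) he
  have hej : ∀ j, -ε ≤ e j ∧ e j ≤ ε := fun j =>
    abs_le.mp (le_trans (by simpa using norm_le_pi_norm e j) he)
  have key : ∀ j, 0 < relu (W.mulVec zstar j) →
      relu (W.mulVec zstar j) = W.mulVec zstar j := by
    intro j hj
    unfold relu at *
    rcases le_total (W.mulVec zstar j) 0 with h | h
    · rw [max_eq_right h] at hj
      exact absurd hj (lt_irrefl _)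
    · exact max_eq_left h
  have hge : ∀ j, W.mulVec zstar j ≤ relu (W.mulVec zstar j) := fun j => le_max_left _ _
  subst hx
  refine ⟨fun j => ⟨fun h => ?_, fun h => ?_⟩, fun z hz => ?_⟩
  · have h1 := hej j
    have h' : ε < relu (W.mulVec zstar j) + e j := h
    have h2 := key j (by linarith)
    show |W.mulVec zstar j - (relu (W.mulVec zstar j) + e j)| ≤ ε
    rw [h2, abs_le]
    constructor <;> linarith
  · have h1 := hej j
    have h2 := hge j
    show W.mulVec zstar j ≤ relu (W.mulVec zstar j) + e j + ε
    linarith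
  · obtain ⟨i, hi, hle⟩ := hext _ hbig (z - zstar)
    have hi2 : 2 * ε < relu (W.mulVec zstar i) := (Finset.mem_filter.mp hi).2
    have h1 := hej i
    have h2 := key i (by linarith)
    have h3 : |W.mulVec z i - (relu (W.mulVec zstar i) + e i)| ≤ ε :=
      (hz i).1 (show ε < relu (W.mulVec zstar i) + e i by linarith)
    rw [h2, abs_le] at h3
    rw [Matrix.mulVec_sub, Pi.sub_apply] at hle
    have h4 : |W.mulVec z i - W.mulVec zstar i| ≤ 2 * ε := by
      rw [abs_le]
      constructor <;> linarith
    rw [le_div_iff₀ hc]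
    linarith
end

section
/- (Multi-layer ℓ∞ error bound for layer-wise LP inversion.) Let d ≥ 1, let n₀ = k, n₁, …, n_d be positive integers, and let W_i ∈ ℝ^{n_i × n_{i−1}} for i = 1,…,d. Let c ∈ (0,2] and suppose each W_i (m_i, c)-extends the ℓ∞ norm for some integer m_i > n_{i−1}. Let z* ∈ ℝ^k, define z₀* = z* and z_i* = ReLU(W_i z_{i−1}*) for i = 1,…,d, and set ε_i = (2/c)^{d−i}·ε. Suppose that for every i ∈ {1,…,d}, the vector z_i* has at least m_i coordinates strictly greater than 2·ε_i. Let e ∈ ℝ^{n_d} with ‖e‖_∞ ≤ ε and x = z_d* + e. Then for every chain of vectors ẑ_d = x, ẑ_{d−1} ∈ ℝ^{n_{d−1}}, …, ẑ₀ ∈ ℝ^{k} in which, for each i = d, d−1, …, 1, the vector ẑ_{i−1} is ε_i-feasible for (W_i, ẑ_i), one has ‖ẑ₀ − z*‖_∞ ≤ (2/c)^d · ε. -/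
/-- **Multi-layer `ℓ∞` error bound for layer-wise LP inversion.**
Layers are indexed `0,…,d−1`: the `(i+1)`-st layer has weight matrix
`W i ∈ ℝ^{n(i+1) × n(i)}` which `(m i, c)`-extends the `ℓ∞` norm with `m i > n i`,
`c ∈ (0,2]`.  The ground-truth activations are `zs 0 = z*`,
`zs (i+1) = ReLU(W i · zs i)`, with tolerances `ε_{i+1} = (2/c)^{d−(i+1)}·ε`, and each
`zs (i+1)` has at least `m i` coordinates strictly greater than `2·ε_{i+1}`.  Given
`x = zs d + e` with `‖e‖_∞ ≤ ε`, any chain `ẑ d = x, ẑ (d−1), …, ẑ 0` in which `ẑ i`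
is `ε_{i+1}`-feasible for `(W i, ẑ (i+1))` satisfies `‖ẑ 0 − z*‖_∞ ≤ (2/c)^d·ε`. -/
theorem multilayer_linf_error_bound
    (d : ℕ) (hd : 1 ≤ d) (n : ℕ → ℕ)
    (W : ∀ i : ℕ, Matrix (Fin (n (i + 1))) (Fin (n i)) ℝ)
    (m : ℕ → ℕ) (c ε : ℝ) (hc : 0 < c) (hc2 : c ≤ 2)
    (hm : ∀ i < d, n i < m i)
    (hext : ∀ i < d, ExtendsLinf (W i) (m i) c)
    (zstar : Fin (n 0) → ℝ) (zs : ∀ j : ℕ, Fin (n j) → ℝ)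
    (hzs0 : zs 0 = zstar)
    (hzs : ∀ i < d, zs (i + 1) = fun j => relu ((W i).mulVec (zs i) j))
    (hbig : ∀ i < d,
      m i ≤ (Finset.univ.filter fun j => 2 * ((2 / c) ^ (d - (i + 1)) * ε) < zs (i + 1) j).card)
    (e : Fin (n d) → ℝ) (he : ‖e‖ ≤ ε)
    (x : Fin (n d) → ℝ) (hx : x = fun j => zs d j + e j)
    (zh : ∀ j : ℕ, Fin (n j) → ℝ) (hzhd : zh d = x)
    (hfeas : ∀ i < d, InfFeasible (W i) (zh (i + 1)) ((2 / c) ^ (d - (i + 1)) * ε) (zh i)) :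
    ‖zh 0 - zstar‖ ≤ (2 / c) ^ d * ε := by
  have hε : 0 ≤ ε := (norm_nonneg e).trans he
  have key : ∀ k ≤ d, ‖zh (d - k) - zs (d - k)‖ ≤ (2 / c) ^ k * ε := by
    intro k
    induction k with
    | zero =>
      intro _
      have h : zh d - zs d = e := by
        rw [hzhd, hx]; ext j; simp
      simpa [h] using he
    | succ k ih =>
      intro hk
      have ih' := ih (by omega)
      obtain ⟨i, hi⟩ : ∃ i, i = d - (k + 1) := ⟨_, rfl⟩
      have h1 : d - k = i + 1 := by omega
      have h2 : d - (i + 1) = k := by omega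
      have hid : i < d := by omega
      rw [h1] at ih'
      rw [← hi]
      have hb := hbig i hid
      have hf := hfeas i hid
      have hz := hzs i hid
      rw [h2] at hb hf
      have hδ : 0 ≤ (2 / c) ^ k * ε := by positivity
      have hpow : (2 / c) ^ (k + 1) * ε = 2 * ((2 / c) ^ k * ε) / c := by
        rw [pow_succ]; ring
      rw [hpow]
      generalize (2 / c) ^ k * ε = δ at *
      obtain ⟨j, hj, hle⟩ := hext i hid _ hb (zh i - zs i)
      have hj' : 2 * δ < zs (i + 1) j := (Finset.mem_filter.mp hj).2
      have h3 : |zh (i + 1) j - zs (i + 1) j| ≤ δ := by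
        have := norm_le_pi_norm (zh (i + 1) - zs (i + 1)) j
        rw [Real.norm_eq_abs, Pi.sub_apply] at this
        exact this.trans ih'
      have h4 : zs (i + 1) j = (W i).mulVec (zs i) j := by
        have h5 : zs (i + 1) j = max ((W i).mulVec (zs i) j) 0 := by
          rw [hz]; rfl
        rcases max_choice ((W i).mulVec (zs i) j) 0 with h | h
        · rw [h5, h]
        · rw [h] at h5; linarith
      have h6 := abs_le.mp h3
      have h7 := abs_le.mp ((hf j).1 (by linarith [h6.1]))
      rw [le_div_iff₀ hc, mul_comm]
      refine hle.trans ?_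
      rw [Matrix.mulVec_sub, Pi.sub_apply, ← h4, abs_le]
      constructor <;> linarith [h6.1, h6.2, h7.1, h7.2]
  have := key d le_rfl
  rw [Nat.sub_self, hzs0] at this
  exact this
end

section
/- (Random Gaussian matrices satisfy the ℓ∞ extension property.) There exist absolute constants c₂ ∈ (0,2], c > 0 and C > 0 with the following property. Let k, N be positive integers with N ≥ 2k, and let A be a random N×k matrix with i.i.d. standard Gaussian entries. Then with probability at least 1 − C·exp(−c·k), for every x ∈ ℝ^k one has ‖Ax‖_∞ ≥ c₂·‖x‖_∞. In particular, for W a random n×k matrix with i.i.d. standard Gaussian entries and n ≥ 5k, each fixed row-subset I ⊆ {1,…,n} with |I| ≥ 2k satisfies ‖W_{I,:}x‖_∞ ≥ c₂‖x‖_∞ for all x with probability at least 1 − C·exp(−c·k). -/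
open MeasureTheory ProbabilityTheory

lemma aux_mgf (t : ℝ) (ht : 0 < t) :
    ∫ x, Real.exp (-t * x ^ 2) ∂(gaussianReal 0 1) = 1 / √(1 + 2 * t) := by
  rw [integral_gaussianReal_eq_integral_smul (by norm_num)]
  have : ∀ x : ℝ, gaussianPDFReal 0 1 x • Real.exp (-t * x ^ 2)
      = (√(2 * Real.pi))⁻¹ * Real.exp (-(t + 1/2) * x ^ 2) := by
    intro x
    simp only [gaussianPDFReal, smul_eq_mul, NNReal.coe_one, mul_one, sub_zero]
    rw [mul_assoc, ← Real.exp_add]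
    ring_nf
  simp_rw [this]
  rw [integral_const_mul, integral_gaussian, ← Real.sqrt_inv, ← Real.sqrt_mul (by positivity),
    ← Real.sqrt_one, ← Real.sqrt_div (by norm_num)]
  rw [Real.sqrt_one]
  congr 1
  have := Real.pi_pos
  field_simp
  ring

lemma aux_chernoff {ι : Type*} [Fintype ι] (s : Finset ι) (t r : ℝ) (ht : 0 < t) :
    (Measure.pi fun _ : ι => gaussianReal 0 1).real {g | ∑ i ∈ s, g i ^ 2 ≤ r}
      ≤ Real.exp (t * r) * (1 / √(1 + 2 * t)) ^ s.card := by
  classical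
  have h := measure_le_le_exp_mul_mgf (μ := Measure.pi fun _ : ι => gaussianReal 0 1)
    (X := fun g => ∑ i ∈ s, g i ^ 2) (t := -t) r (by linarith) (by
      refine Integrable.of_bound (C := 1)
        (Measurable.aestronglyMeasurable (by fun_prop)) (ae_of_all _ fun g => ?_)
      rw [Real.norm_eq_abs, abs_of_pos (Real.exp_pos _), Real.exp_le_one_iff]
      have : 0 ≤ ∑ i ∈ s, g i ^ 2 := Finset.sum_nonneg fun i _ => sq_nonneg _
      nlinarith)
  refine h.trans (le_of_eq ?_)
  rw [neg_neg]
  congr 1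
  have key : ∀ g : ι → ℝ, Real.exp (-t * ∑ i ∈ s, g i ^ 2)
      = ∏ i, (fun (i : ι) (x : ℝ) => if i ∈ s then Real.exp (-t * x ^ 2) else 1) i (g i) := by
    intro g
    rw [Finset.mul_sum, Real.exp_sum, Finset.prod_ite_mem, Finset.univ_inter]
  rw [mgf, integral_congr_ae (ae_of_all _ key)]
  refine (integral_fintype_prod_eq_prod (μ := fun _ : ι => gaussianReal 0 1)
    (fun (i : ι) (x : ℝ) => if i ∈ s then Real.exp (-t * x ^ 2) else 1)).trans ?_
  have : ∀ i, ∫ x, (if i ∈ s then Real.exp (-t * x ^ 2) else 1) ∂(gaussianReal 0 1)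
      = if i ∈ s then 1 / √(1 + 2 * t) else 1 := by
    intro i
    split_ifs
    · exact aux_mgf t ht
    · simp
  simp_rw [this]
  rw [Finset.prod_ite_mem, Finset.univ_inter, Finset.prod_const]

lemma aux_subspace {n : ℕ} (H : Submodule ℝ (EuclideanSpace ℝ (Fin n))) (m : ℕ)
    (hm : m + Module.finrank ℝ H ≤ n) (t r : ℝ) (ht : 0 < t) :
    (Measure.pi fun _ : Fin n => gaussianReal 0 1)
      {a | ∃ h ∈ H, ‖WithLp.toLp 2 a - h‖ ^ 2 ≤ r}
      ≤ ENNReal.ofReal (Real.exp (t * r) * (1 / √(1 + 2 * t)) ^ m) := by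
  classical
  set w := stdOrthonormalBasis ℝ Hᗮ with hw
  have hfr : m ≤ Module.finrank ℝ Hᗮ := by
    have := H.finrank_add_finrank_orthogonal
    rw [finrank_euclideanSpace_fin] at this
    omega
  have hon : Orthonormal ℝ (fun i => (w i : EuclideanSpace ℝ (Fin n))) :=
    w.orthonormal.comp_linearIsometry Hᗮ.subtypeₗᵢ
  have hinj := hon.linearIndependent.injective
  obtain ⟨u, b, hu, hb⟩ := ((orthonormal_subtype_range hinj).2 hon).exists_orthonormalBasis_extension
  set s : Finset u := Finset.univ.filter (fun i => b i ∈ Hᗮ) with hs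
  have hcard : m ≤ s.card := by
    refine hfr.trans ?_
    have : Module.finrank ℝ Hᗮ = (Finset.univ : Finset (Fin (Module.finrank ℝ Hᗮ))).card := by simp
    rw [this]
    refine Finset.card_le_card_of_injOn
      (fun i => ⟨(w i : EuclideanSpace ℝ (Fin n)), hu ⟨i, rfl⟩⟩) ?_ ?_
    · intro i _
      simp [hs, hb]
    · intro i _ j _ hij
      exact hinj (Subtype.mk.inj hij)
  have hmeas : Measurable (fun y : EuclideanSpace ℝ (Fin n) => ∑ i ∈ s, (inner ℝ (b i) y) ^ 2) := by
    fun_prop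
  calc _ ≤ (Measure.pi fun _ : Fin n => gaussianReal 0 1)
          (WithLp.toLp 2 ⁻¹' {y : EuclideanSpace ℝ (Fin n) | ∑ i ∈ s, (inner ℝ (b i) y) ^ 2 ≤ r}) := by
        refine measure_mono ?_
        rintro a ⟨h, hh, hr⟩
        simp only [Set.mem_preimage, Set.mem_ofPred_eq]
        refine le_trans ?_ hr
        rw [← b.sum_sq_inner_right]
        calc _ = ∑ i ∈ s, (inner ℝ (b i) (WithLp.toLp 2 a - h)) ^ 2 := by
              refine Finset.sum_congr rfl fun i hi => ?_
              have : inner ℝ (b i) h = 0 := by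
                rw [real_inner_comm]
                exact (Finset.mem_filter.1 hi).2 h hh
              rw [inner_sub_right, this, sub_zero]
          _ ≤ _ := Finset.sum_le_sum_of_subset_of_nonneg (Finset.subset_univ _)
              fun _ _ _ => sq_nonneg _
    _ = stdGaussian (EuclideanSpace ℝ (Fin n)) {y | ∑ i ∈ s, (inner ℝ (b i) y) ^ 2 ≤ r} := by
        rw [← map_pi_eq_stdGaussian, Measure.map_apply (by fun_prop)
          (measurableSet_le hmeas measurable_const)]
    _ = (Measure.pi fun _ : u => gaussianReal 0 1) {g | ∑ i ∈ s, g i ^ 2 ≤ r} := by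
        rw [stdGaussian_eq_map_pi_orthonormalBasis b, Measure.map_apply (by fun_prop)
          (measurableSet_le hmeas measurable_const)]
        congr 1
        ext g
        simp only [Set.mem_preimage, Set.mem_ofPred_eq]
        have : ∀ i, inner ℝ (b i) (∑ j, g j • b j) = g i := fun i =>
          b.orthonormal.inner_right_fintype g i
        simp_rw [this]
    _ ≤ _ := by
        rw [← ofReal_measureReal]
        refine ENNReal.ofReal_le_ofReal ((aux_chernoff s t r ht).trans ?_)
        refine mul_le_mul_of_nonneg_left ?_ (Real.exp_pos _).le
        refine pow_le_pow_of_le_one (by positivity) ?_ hcard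
        rw [div_le_one (by positivity), Real.one_le_sqrt]
        linarith

noncomputable def auxT : ℝ := (Real.exp 8 - 1) / 2

lemma auxT_one : 1 ≤ auxT := by
  have := Real.add_one_le_exp (8 : ℝ)
  unfold auxT
  linarith

noncomputable def auxE : ℝ := 1 / √auxT

lemma auxE_pos : 0 < auxE := by
  have := auxT_one
  unfold auxE
  positivity

lemma auxE_le : auxE ≤ 1 := by
  have := auxT_one
  unfold auxE
  rw [div_le_one (by positivity), Real.one_le_sqrt]
  exact this

lemma auxE_sq : auxT * auxE ^ 2 = 1 := by
  have := auxT_one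
  unfold auxE
  rw [div_pow, Real.sq_sqrt (by linarith)]
  field_simp

lemma auxT_sqrt : 1 / √(1 + 2 * auxT) = Real.exp (-4) := by
  have : 1 + 2 * auxT = Real.exp 4 ^ 2 := by
    unfold auxT
    rw [← Real.exp_nat_mul]
    norm_num
    ring
  rw [this, Real.sqrt_sq (Real.exp_pos _).le, Real.exp_neg, one_div]

lemma aux_col {n k : ℕ} (M : Fin n → Fin k → ℝ) (I : Finset (Fin n)) (hI : 2 * (k + 1) ≤ I.card) :
    (Measure.pi fun _ : Fin n => gaussianReal 0 1)
      {a | ∃ z : Fin k → ℝ, ∀ i ∈ I, |a i + ∑ l, M i l * z l| < auxE}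
      ≤ ENNReal.ofReal (Real.exp (-2 * ((k + 1 : ℕ) : ℝ))) := by
  classical
  let L : ((Fin k → ℝ) × ({i // i ∉ I} → ℝ)) →ₗ[ℝ] EuclideanSpace ℝ (Fin n) :=
    { toFun := fun p => WithLp.toLp 2 fun i =>
        if h : i ∈ I then ∑ l, M i l * p.1 l else p.2 ⟨i, h⟩
      map_add' := by
        intro p q
        ext i
        by_cases h : i ∈ I <;> simp [h, mul_add, Finset.sum_add_distrib]
      map_smul' := by
        intro c p
        ext i
        by_cases h : i ∈ I
        · simp only [h, dite_true, Prod.smul_fst, Pi.smul_apply, smul_eq_mul, RingHom.id_apply,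
            PiLp.smul_apply, Finset.mul_sum]
          exact Finset.sum_congr rfl fun l _ => by ring
        · simp [h] }
  have hL1 : ∀ p i, i ∈ I → L p i = ∑ l, M i l * p.1 l := fun p i h => by simp [L, h]
  have hL2 : ∀ p i (h : i ∉ I), L p i = p.2 ⟨i, h⟩ := fun p i h => by simp [L, h]
  have hcI : I.card ≤ n := by simpa using I.card_le_univ
  have hrank : Module.finrank ℝ (LinearMap.range L) ≤ k + (n - I.card) := by
    refine (LinearMap.finrank_range_le L).trans (le_of_eq ?_)
    rw [Module.finrank_prod, Module.finrank_fintype_fun_eq_card,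
      Module.finrank_fintype_fun_eq_card, Fintype.card_fin, Fintype.card_subtype_compl]
    simp
  have hB := aux_subspace (LinearMap.range L) (I.card - k) (by omega) auxT (auxE ^ 2 * I.card)
    (by linarith [auxT_one])
  refine (measure_mono ?_).trans (hB.trans (ENNReal.ofReal_le_ofReal ?_))
  · rintro a ⟨z, hz⟩
    refine ⟨L (-z, fun i => a i), LinearMap.mem_range_self _ _, ?_⟩
    rw [EuclideanSpace.real_norm_sq_eq, ← Finset.sum_subset (Finset.subset_univ I)]
    · refine (Finset.sum_le_card_nsmul I _ (auxE ^ 2) fun i hi => ?_).trans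
        (le_of_eq (by rw [nsmul_eq_mul, mul_comm]))
      rw [PiLp.sub_apply, hL1 _ _ hi]
      have := (hz i hi).le
      rw [← sq_abs]
      refine pow_le_pow_left₀ (abs_nonneg _) ?_ 2
      simpa using this
    · intro i _ hi
      rw [PiLp.sub_apply, hL2 _ _ hi]
      simp
  · rw [auxT_sqrt, ← mul_assoc, auxE_sq, ← Real.exp_nat_mul, ← Real.exp_add, Real.exp_le_exp]
    rw [Nat.cast_sub (by omega)]
    have : (2 * (k + 1) : ℝ) ≤ I.card := by exact_mod_cast hI
    push_cast
    nlinarith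

lemma aux_j {n k : ℕ} (j : Fin (k + 1)) (I : Finset (Fin n)) (hI : 2 * (k + 1) ≤ I.card) :
    stdGaussianMatrix n (k + 1)
      {A | ∃ x : Fin (k + 1) → ℝ, x j = 1 ∧ ∀ i ∈ I, |∑ l, A i l * x l| < auxE}
      ≤ ENNReal.ofReal (Real.exp (-2 * ((k + 1 : ℕ) : ℝ))) := by
  have h1 := measurePreserving_pi (ι := Fin n) (fun _ => Measure.pi fun _ : Fin (k + 1) => gaussianReal 0 1)
    _ (fun _ => measurePreserving_piFinSuccAbove (fun _ : Fin (k + 1) => gaussianReal 0 1) j)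
  have h2 := measurePreserving_arrowProdEquivProdArrow ℝ (Fin k → ℝ) (Fin n)
    (fun _ => gaussianReal 0 1) (fun _ => Measure.pi fun _ : Fin k => gaussianReal 0 1)
  have h3 := h2.comp h1
  set B : Set ((Fin n → ℝ) × (Fin n → Fin k → ℝ)) :=
    {p | ∃ z : Fin k → ℝ, ∀ i ∈ I, |p.1 i + ∑ l, p.2 i l * z l| < auxE} with hB
  have hBo : IsOpen B := by
    have : B = ⋃ z : Fin k → ℝ, ⋂ i ∈ I, {p | |p.1 i + ∑ l, p.2 i l * z l| < auxE} := by
      ext p; simp [hB]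
    rw [this]
    refine isOpen_iUnion fun z => isOpen_biInter_finset fun i _ => isOpen_lt ?_ continuous_const
    fun_prop
  have hsub : {A : Fin n → Fin (k + 1) → ℝ |
      ∃ x : Fin (k + 1) → ℝ, x j = 1 ∧ ∀ i ∈ I, |∑ l, A i l * x l| < auxE}
      ⊆ (MeasurableEquiv.arrowProdEquivProdArrow ℝ (Fin k → ℝ) (Fin n) ∘
        fun a i => MeasurableEquiv.piFinSuccAbove (fun _ : Fin (k + 1) => ℝ) j (a i)) ⁻¹' B := by
    rintro A ⟨x, hx, h⟩
    refine ⟨fun l => x (j.succAbove l), fun i hi => ?_⟩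
    have := h i hi
    rw [Fin.sum_univ_succAbove _ j, hx, mul_one] at this
    exact this
  refine (measure_mono hsub).trans ?_
  unfold stdGaussianMatrix
  rw [h3.measure_preimage hBo.measurableSet.nullMeasurableSet,
    Measure.prod_apply_symm hBo.measurableSet]
  refine (lintegral_mono fun M => aux_col M I hI).trans ?_
  simp

lemma aux_main {n k : ℕ} (hk : 0 < k) (I : Finset (Fin n)) (hI : 2 * k ≤ I.card)
    (S : Set (Fin n → Fin k → ℝ))
    (hS : ∀ A, A ∉ S → ∃ x : Fin k → ℝ, ∀ i ∈ I, |∑ l, A i l * x l| < auxE * ‖x‖) :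
    1 - ENNReal.ofReal (1 * Real.exp (-1 * (k : ℝ))) ≤ stdGaussianMatrix n k S := by
  obtain ⟨k, rfl⟩ : ∃ m, k = m + 1 := ⟨k - 1, by omega⟩
  have : IsProbabilityMeasure (stdGaussianMatrix n (k + 1)) := by
    unfold stdGaussianMatrix; infer_instance
  have hI0 : I.Nonempty := Finset.card_pos.1 (by omega)
  have hsub : Sᶜ ⊆ ⋃ j : Fin (k + 1),
      {A | ∃ x : Fin (k + 1) → ℝ, x j = 1 ∧ ∀ i ∈ I, |∑ l, A i l * x l| < auxE} := by
    intro A hA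
    obtain ⟨x, hx⟩ := hS A hA
    have hx0 : 0 < ‖x‖ := by
      obtain ⟨i, hi⟩ := hI0
      have := (abs_nonneg _).trans_lt (hx i hi)
      exact (pos_iff_pos_of_mul_pos this).1 auxE_pos
    obtain ⟨j, hj⟩ : ∃ j, ‖x j‖ = ‖x‖ := by
      obtain ⟨j, -, hj⟩ := Finset.exists_max_image Finset.univ (fun j => ‖x j‖)
        Finset.univ_nonempty
      refine ⟨j, le_antisymm (norm_le_pi_norm x j) ?_⟩
      exact (pi_norm_le_iff_of_nonneg (norm_nonneg _)).2 fun l => hj l (Finset.mem_univ l)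
    have hj0 : 0 < |x j| := by rw [← Real.norm_eq_abs, hj]; exact hx0
    refine Set.mem_iUnion.2 ⟨j, fun l => x l / x j, div_self (abs_pos.1 hj0), fun i hi => ?_⟩
    have := hx i hi
    simp_rw [← mul_div_assoc]
    rw [← Finset.sum_div, abs_div, div_lt_iff₀ hj0, ← Real.norm_eq_abs (x j), hj]
    exact this
  have hbound : stdGaussianMatrix n (k + 1) Sᶜ
      ≤ ENNReal.ofReal (1 * Real.exp (-1 * ((k + 1 : ℕ) : ℝ))) := by
    refine (measure_mono hsub).trans ((measure_iUnion_fintype_le _ _).trans ?_)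
    refine (Finset.sum_le_sum fun j _ => aux_j j I hI).trans ?_
    rw [Finset.sum_const, Finset.card_univ, Fintype.card_fin, ← ENNReal.ofReal_nsmul]
    refine ENNReal.ofReal_le_ofReal ?_
    rw [nsmul_eq_mul]
    set y : ℝ := ((k + 1 : ℕ) : ℝ)
    have h1 : y ≤ Real.exp y := by linarith [Real.add_one_le_exp y]
    calc y * Real.exp (-2 * y) ≤ Real.exp y * Real.exp (-2 * y) := by gcongr
      _ = 1 * Real.exp (-1 * y) := by rw [← Real.exp_add]; ring_nf
  refine tsub_le_iff_right.2 ?_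
  calc (1 : ENNReal) = stdGaussianMatrix n (k + 1) (S ∪ Sᶜ) := by simp
    _ ≤ _ := (measure_union_le _ _).trans (by gcongr)

/-- **Random Gaussian matrices satisfy the `ℓ∞` extension property.**
There are absolute constants `c₂ ∈ (0,2]`, `c > 0`, `C > 0` such that:
(1) for positive integers `k, N` with `N ≥ 2k` and `A` a random `N×k` matrix with
i.i.d. standard Gaussian entries, with probability at least `1 − C·exp(−c·k)` one has
`‖Ax‖_∞ ≥ c₂‖x‖_∞` for every `x ∈ ℝ^k`; and
(2) for `W` a random `n×k` Gaussian matrix with `n ≥ 5k` and any fixed row set `I` with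
`|I| ≥ 2k`, with probability at least `1 − C·exp(−c·k)` one has
`‖W_{I,:}x‖_∞ ≥ c₂‖x‖_∞` for all `x` (the sup over rows in `I` being expressed by an
existential witness). -/
theorem random_gaussian_linf_extension :
    ∃ c₂ c C : ℝ, 0 < c₂ ∧ c₂ ≤ 2 ∧ 0 < c ∧ 0 < C ∧
      (∀ k N : ℕ, 0 < k → 2 * k ≤ N →
        1 - ENNReal.ofReal (C * Real.exp (-c * (k : ℝ))) ≤
          stdGaussianMatrix N k
            {A | ∀ x : Fin k → ℝ, c₂ * ‖x‖ ≤ ‖(Matrix.of A).mulVec x‖}) ∧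
      (∀ n k : ℕ, 0 < k → 5 * k ≤ n → ∀ I : Finset (Fin n), 2 * k ≤ I.card →
        1 - ENNReal.ofReal (C * Real.exp (-c * (k : ℝ))) ≤
          stdGaussianMatrix n k
            {W | ∀ x : Fin k → ℝ, ∃ i ∈ I, c₂ * ‖x‖ ≤ |(Matrix.of W).mulVec x i|}) := by
  refine ⟨auxE, 1, 1, auxE_pos, by linarith [auxE_le], one_pos, one_pos, ?_, ?_⟩
  · intro k N hk hN
    refine aux_main hk Finset.univ (by simpa using hN) _ fun A hA => ?_
    simp only [Set.mem_ofPred_eq, not_forall, not_le] at hA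
    obtain ⟨x, hx⟩ := hA
    refine ⟨x, fun i _ => ?_⟩
    exact (norm_le_pi_norm ((Matrix.of A).mulVec x) i).trans_lt hx
  · intro n k hk _ I hI
    refine aux_main hk I hI _ fun A hA => ?_
    simp only [Set.mem_ofPred_eq, not_forall, not_exists, not_and, not_le] at hA
    obtain ⟨x, hx⟩ := hA
    exact ⟨x, fun i hi => hx i hi⟩
end

section
/- (Approximate inversion of a single noisy ReLU layer in ℓ1.) Let W ∈ ℝ^{n×k} with rows w_1,…,w_n, let m > k be an integer and c₁ > 0 a constant, and suppose W (m,c₁)-extends the ℓ1 norm. Let z* ∈ ℝ^k, let e ∈ ℝ^n with ‖e‖₁ ≤ ε, and set x = ReLU(Wz*) + e. Assume ReLU(Wz*) has at least m coordinates strictly greater than 2ε, and let I = {j : x_j > ε}. Then |I| ≥ m, W_{I,:}z* = x*_I where x* = ReLU(Wz*), and every z ∈ ℝ^k with Σ_{j∈I} |w_j·z − x_j| ≤ Σ_{j∈I} |w_j·z* − x_j| satisfies ‖z − z*‖₁ ≤ 2ε/c₁. (In particular, this holds for any minimizer of Σ_{j∈I}|w_j·z − x_j|, e.g. the output of the ℓ1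 linear program.) -/
/-- `W` `(m,c₁)`-extends the `ℓ1` norm: for every index set `I` with `|I| ≥ m` and every
`a ∈ ℝ^k`, `‖W_{I,:}a‖₁ ≥ c₁‖a‖₁`. -/
def ExtendsL1 {n k : ℕ} (W : Matrix (Fin n) (Fin k) ℝ) (m : ℕ) (c₁ : ℝ) : Prop :=
  ∀ I : Finset (Fin n), m ≤ I.card →
    ∀ a : Fin k → ℝ, c₁ * ∑ j, |a j| ≤ ∑ i ∈ I, |W.mulVec a i|

/-- **Approximate inversion of a single noisy ReLU layer in `ℓ1`.**
Suppose `W` `(m,c₁)`-extends the `ℓ1` norm with `m > k`, `x = ReLU(Wz*) + e` with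
`‖e‖₁ ≤ ε`, and `ReLU(Wz*)` has at least `m` coordinates strictly greater than `2ε`.
With `I = {j : x_j > ε}` one has `|I| ≥ m`, `W_{I,:}z* = (ReLU(Wz*))_I`, and every `z`
whose `ℓ1` data-fit on `I` is no worse than that of `z*` satisfies
`‖z − z*‖₁ ≤ 2ε/c₁`. -/
theorem single_layer_noisy_relu_l1_inversion
    (n k m : ℕ) (W : Matrix (Fin n) (Fin k) ℝ) (c₁ ε : ℝ)
    (hc : 0 < c₁) (hm : k < m) (hext : ExtendsL1 W m c₁)
    (zstar : Fin k → ℝ) (e : Fin n → ℝ) (he : ∑ j, |e j| ≤ ε)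
    (x : Fin n → ℝ) (hx : x = fun j => relu (W.mulVec zstar j) + e j)
    (hbig : m ≤ (Finset.univ.filter fun j => 2 * ε < relu (W.mulVec zstar j)).card) :
    m ≤ (Finset.univ.filter fun j => ε < x j).card ∧
    (∀ j ∈ Finset.univ.filter fun j => ε < x j,
      W.mulVec zstar j = relu (W.mulVec zstar j)) ∧
    (∀ z : Fin k → ℝ,
      (∑ j ∈ Finset.univ.filter fun j => ε < x j, |W.mulVec z j - x j|) ≤
        (∑ j ∈ Finset.univ.filter fun j => ε < x j, |W.mulVec zstar j - x j|) →
      ∑ j, |z j - zstar j| ≤ 2 * ε / c₁) := by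
  have hej : ∀ j, |e j| ≤ ε := fun j =>
    (Finset.single_le_sum (f := fun j => |e j|) (fun i _ => abs_nonneg _)
      (Finset.mem_univ j)).trans he
  have hxj : ∀ j, x j = relu (W.mulVec zstar j) + e j := fun j => by rw [hx]
  have h1 : m ≤ (Finset.univ.filter fun j => ε < x j).card := by
    refine hbig.trans (Finset.card_le_card ?_)
    intro j hj
    simp only [Finset.mem_filter, Finset.mem_univ, true_and] at hj ⊢
    have := (abs_le.mp (hej j)).1
    rw [hxj]
    linarith
  have h2 : ∀ j ∈ Finset.univ.filter fun j => ε < x j,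
      W.mulVec zstar j = relu (W.mulVec zstar j) := by
    intro j hj
    simp only [Finset.mem_filter, Finset.mem_univ, true_and] at hj
    have := (abs_le.mp (hej j)).2
    rw [hxj] at hj
    have hpos : 0 < relu (W.mulVec zstar j) := by linarith
    unfold relu at hpos ⊢
    rcases lt_max_iff.mp hpos with h | h
    · exact (max_eq_left h.le).symm
    · exact absurd h (lt_irrefl _)
  refine ⟨h1, h2, fun z hz => ?_⟩
  have h3 := hext _ h1 (z - zstar)
  have h4 : (∑ j ∈ Finset.univ.filter fun j => ε < x j, |W.mulVec zstar j - x j|) ≤ ε := by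
    refine le_trans ?_ he
    refine le_trans (Finset.sum_le_sum (g := fun j => |e j|) ?_)
      (Finset.sum_le_sum_of_subset_of_nonneg (Finset.subset_univ _)
        (fun i _ _ => abs_nonneg _))
    intro j hj
    have hr := h2 j hj
    have hj2 : W.mulVec zstar j - x j = -e j := by
      rw [hxj]; linarith
    rw [hj2, abs_neg]
  have h5 : (∑ j ∈ Finset.univ.filter fun j => ε < x j, |W.mulVec (z - zstar) j|) ≤
      (∑ j ∈ Finset.univ.filter fun j => ε < x j, |W.mulVec z j - x j|) +
      (∑ j ∈ Finset.univ.filter fun j => ε < x j, |W.mulVec zstar j - x j|) := by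
    rw [← Finset.sum_add_distrib]
    refine Finset.sum_le_sum fun j _ => ?_
    rw [Matrix.mulVec_sub, Pi.sub_apply]
    have := abs_sub (W.mulVec z j - x j) (W.mulVec zstar j - x j)
    rwa [sub_sub_sub_cancel_right] at this
  rw [le_div_iff₀ hc]
  simp only [Pi.sub_apply] at h3
  linarith
end

section
/- (Multi-layer ℓ1 error bound for layer-wise LP inversion.) Let d ≥ 1, let n₀ = k, n₁, …, n_d be positive integers, and let W_i ∈ ℝ^{n_i × n_{i−1}} for i = 1,…,d. Let c₁ ∈ (0,2] and suppose each W_i (m_i, c₁)-extends the ℓ1 norm for some integer m_i > n_{i−1}. Let z* ∈ ℝ^k, define z₀* = z* and z_i* = ReLU(W_i z_{i−1}*) for i = 1,…,d, and set ε_i = (2/c₁)^{d−i}·ε. Suppose that for every i ∈ {1,…,d}, the vector z_i* has at least m_i coordinates strictly greater than 2·ε_i. Let e ∈ ℝ^{n_d} with ‖e‖₁ ≤ ε and x = z_d* + e. Then for every chain of vectors ẑ_d = x, ẑ_{d−1}, …, ẑ₀ in which, for each i = d, d−1, …, 1, setting I_i = {j : (ẑ_i)_j > ε_i}, the vector ẑ_{i−1}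 satisfies Σ_{j∈I_i} |(W_i ẑ_{i−1})_j − (ẑ_i)_j| ≤ Σ_{j∈I_i} |(W_i z_{i−1}*)_j − (ẑ_i)_j|, one has ‖ẑ₀ − z*‖₁ ≤ (2/c₁)^d · ε. -/
theorem layer_step {p q : ℕ} (W : Matrix (Fin p) (Fin q) ℝ) (m : ℕ) (c δ : ℝ) (hc : 0 < c)
    (hext : ExtendsL1 W m c) (zs zh : Fin q → ℝ) (ys yh : Fin p → ℝ)
    (hys : ys = fun j => relu (W.mulVec zs j))
    (hbig : m ≤ (Finset.univ.filter fun j => 2 * δ < ys j).card)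
    (herr : ∑ j, |yh j - ys j| ≤ δ)
    (hopt : (∑ j ∈ Finset.univ.filter fun j => δ < yh j, |W.mulVec zh j - yh j|) ≤
      ∑ j ∈ Finset.univ.filter fun j => δ < yh j, |W.mulVec zs j - yh j|) :
    ∑ j, |zh j - zs j| ≤ 2 / c * δ := by
  have hj : ∀ j, |yh j - ys j| ≤ δ := fun j =>
    (Finset.single_le_sum (f := fun j => |yh j - ys j|) (fun i _ => abs_nonneg _)
      (Finset.mem_univ j)).trans herr
  have hcard : m ≤ (Finset.univ.filter fun j => δ < yh j).card := by
    refine hbig.trans (Finset.card_le_card ?_)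
    intro j
    simp only [Finset.mem_filter, Finset.mem_univ, true_and]
    intro h
    have := (abs_le.mp (hj j)).1
    linarith
  have h1 := hext _ hcard (fun j => zh j - zs j)
  have h2 : ∑ j ∈ Finset.univ.filter fun j => δ < yh j, |W.mulVec zs j - yh j| ≤ δ := by
    refine le_trans ?_ herr
    refine le_trans (Finset.sum_le_sum (g := fun j => |yh j - ys j|) ?_)
      (Finset.sum_le_sum_of_subset_of_nonneg (Finset.subset_univ _)
        (fun i _ _ => abs_nonneg _))
    intro j hjm
    have hlt : δ < yh j := (Finset.mem_filter.mp hjm).2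
    have hpos : 0 < ys j := by
      have := (abs_le.mp (hj j)).2
      linarith
    have : ys j = W.mulVec zs j := by
      rw [hys] at hpos ⊢
      simp only [relu] at hpos ⊢
      rcases le_total (W.mulVec zs j) 0 with h | h
      · rw [max_eq_right h] at hpos
        exact absurd hpos (lt_irrefl _)
      · exact max_eq_left h
    rw [← this, abs_sub_comm]
  have h3 : ∑ j ∈ Finset.univ.filter fun j => δ < yh j, |W.mulVec (fun j => zh j - zs j) j| ≤
      (∑ j ∈ Finset.univ.filter fun j => δ < yh j, |W.mulVec zh j - yh j|) +
      ∑ j ∈ Finset.univ.filter fun j => δ < yh j, |W.mulVec zs j - yh j| := by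
    rw [← Finset.sum_add_distrib]
    refine Finset.sum_le_sum fun j _ => ?_
    have : W.mulVec (fun j => zh j - zs j) j = (W.mulVec zh j - yh j) - (W.mulVec zs j - yh j) := by
      have h := congrFun (Matrix.mulVec_sub W zh zs) j
      rw [Pi.sub_apply] at h
      rw [sub_sub_sub_cancel_right, ← h]
      rfl
    rw [this]
    exact abs_sub _ _
  rw [div_mul_eq_mul_div, le_div_iff₀ hc]
  linarith

/-- **Multi-layer `ℓ1` error bound for layer-wise LP inversion.**
Layers are indexed `0,…,d−1`: the `(i+1)`-st layer has weight matrix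
`W i ∈ ℝ^{n(i+1) × n(i)}` which `(m i, c₁)`-extends the `ℓ1` norm with `m i > n i`,
`c₁ ∈ (0,2]`.  The ground-truth activations are `zs 0 = z*`,
`zs (i+1) = ReLU(W i · zs i)`, with tolerances `ε_{i+1} = (2/c₁)^{d−(i+1)}·ε`, and each
`zs (i+1)` has at least `m i` coordinates strictly greater than `2·ε_{i+1}`.  Given
`x = zs d + e` with `‖e‖₁ ≤ ε`, any chain `ẑ d = x, …, ẑ 0` in which each `ẑ i` has
`ℓ1` data-fit on `I_{i+1} = {j : (ẑ (i+1))_j > ε_{i+1}}` no worse than the ground truth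
`zs i` satisfies `‖ẑ 0 − z*‖₁ ≤ (2/c₁)^d·ε`. -/
theorem multilayer_l1_error_bound
    (d : ℕ) (hd : 1 ≤ d) (n : ℕ → ℕ)
    (W : ∀ i : ℕ, Matrix (Fin (n (i + 1))) (Fin (n i)) ℝ)
    (m : ℕ → ℕ) (c₁ ε : ℝ) (hc : 0 < c₁) (hc2 : c₁ ≤ 2)
    (hm : ∀ i < d, n i < m i)
    (hext : ∀ i < d, ExtendsL1 (W i) (m i) c₁)
    (zstar : Fin (n 0) → ℝ) (zs : ∀ j : ℕ, Fin (n j) → ℝ)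
    (hzs0 : zs 0 = zstar)
    (hzs : ∀ i < d, zs (i + 1) = fun j => relu ((W i).mulVec (zs i) j))
    (hbig : ∀ i < d,
      m i ≤ (Finset.univ.filter fun j =>
        2 * ((2 / c₁) ^ (d - (i + 1)) * ε) < zs (i + 1) j).card)
    (e : Fin (n d) → ℝ) (he : ∑ j, |e j| ≤ ε)
    (x : Fin (n d) → ℝ) (hx : x = fun j => zs d j + e j)
    (zh : ∀ j : ℕ, Fin (n j) → ℝ) (hzhd : zh d = x)
    (hopt : ∀ i < d,
      (∑ j ∈ Finset.univ.filter fun j =>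
          (2 / c₁) ^ (d - (i + 1)) * ε < zh (i + 1) j,
        |(W i).mulVec (zh i) j - zh (i + 1) j|) ≤
      (∑ j ∈ Finset.univ.filter fun j =>
          (2 / c₁) ^ (d - (i + 1)) * ε < zh (i + 1) j,
        |(W i).mulVec (zs i) j - zh (i + 1) j|)) :
    ∑ j, |zh 0 j - zstar j| ≤ (2 / c₁) ^ d * ε := by
  have key : ∀ k i : ℕ, i + k = d → ∑ j, |zh i j - zs i j| ≤ (2 / c₁) ^ k * ε := by
    intro k
    induction k with
    | zero =>
      intro i hi
      obtain rfl : i = d := by omega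
      simpa [hzhd, hx] using he
    | succ k ih =>
      intro i hi
      have hid : i < d := by omega
      have hk : d - (i + 1) = k := by omega
      have hb := hbig i hid
      have ho := hopt i hid
      rw [hk] at hb ho
      have := layer_step (W i) (m i) c₁ _ hc (hext i hid) (zs i) (zh i) (zs (i + 1)) (zh (i + 1))
        (hzs i hid) hb (ih (i + 1) (by omega)) ho
      rw [pow_succ', mul_assoc]
      exact this
  rw [← hzs0]
  exact key d 0 (by omega)
end

section
/- (Exactness of the relaxed LP in the realizable case.) Let W ∈ ℝ^{n×k} with rows w_1,…,w_n, let z* ∈ ℝ^k, and set x = ReLU(Wz*). Consider the linear program: maximize Σ_{i=1}^{n} max(0, x_i)·(w_i·z) over z ∈ ℝ^k subject to w_i·z ≤ x_i for all i. Then z* is feasible, and a feasible z is an optimal solution of this linear program if and only if ReLU(Wz) = x; i.e., the set of optimal solutions is exactly the preimage {z : ReLU(Wz) = x}. -/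
/-- **Exactness of the relaxed LP in the realizable case.**
Let `x = ReLU(Wz*)` and consider the linear program: maximize
`Σ_i max(0, x_i)·(w_i·z)` subject to `w_i·z ≤ x_i` for all `i`.  Then `z*` is feasible,
and a feasible `z` is optimal iff `ReLU(Wz) = x`; that is, the optimal set is exactly
the preimage `{z : ReLU(Wz) = x}`. -/
theorem relaxed_LP_exact_realizable
    (n k : ℕ) (W : Matrix (Fin n) (Fin k) ℝ) (zstar : Fin k → ℝ)
    (x : Fin n → ℝ) (hx : x = fun i => relu (W.mulVec zstar i)) :
    (∀ i, W.mulVec zstar i ≤ x i) ∧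
    (∀ z : Fin k → ℝ, (∀ i, W.mulVec z i ≤ x i) →
      ((∀ z' : Fin k → ℝ, (∀ i, W.mulVec z' i ≤ x i) →
          ∑ i, max 0 (x i) * W.mulVec z' i ≤ ∑ i, max 0 (x i) * W.mulVec z i) ↔
        (∀ i, relu (W.mulVec z i) = x i))) := by
  have h0 : ∀ i, 0 ≤ x i := fun i => by rw [hx]; exact le_max_right _ _
  have hf : ∀ i, W.mulVec zstar i ≤ x i := fun i => by rw [hx]; exact le_max_left _ _
  have hs : ∀ i, x i = 0 ∨ W.mulVec zstar i = x i := fun i => by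
    have h : x i = max (W.mulVec zstar i) 0 := by rw [hx]; rfl
    rcases max_choice (W.mulVec zstar i) 0 with h' | h'
    · right; rw [h, h']
    · left; rw [h, h']
  have hm : ∀ i, max 0 (x i) = x i := fun i => max_eq_right (h0 i)
  simp only [hm]
  refine ⟨hf, fun z hz => ⟨fun hopt i => ?_, fun hr z' hz' => ?_⟩⟩
  · have hle : ∀ j ∈ Finset.univ, x j * W.mulVec z j ≤ x j * W.mulVec zstar j := fun j _ => by
      rcases hs j with h | h
      · simp [h]
      · rw [h]; exact mul_le_mul_of_nonneg_left (hz j) (h0 j)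
    have heq := (Finset.sum_eq_sum_iff_of_le hle).1
      (le_antisymm (Finset.sum_le_sum hle) (hopt zstar hf)) i (Finset.mem_univ i)
    unfold relu
    by_cases hxi : x i = 0
    · rw [hxi]; exact max_eq_right (by rw [← hxi]; exact hz i)
    · have h := (hs i).resolve_left hxi
      rw [h] at heq
      rw [mul_left_cancel₀ hxi heq]
      exact max_eq_left (h0 i)
  · refine Finset.sum_le_sum fun j _ => ?_
    by_cases hxj : x j = 0
    · simp [hxj]
    · have h : W.mulVec z j = x j := by
        have h1 := hr j
        unfold relu at h1
        rcases max_choice (W.mulVec z j) 0 with h' | h'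
        · rw [← h', h1]
        · exact absurd (h1.symm.trans h') hxj
      rw [h]
      exact mul_le_mul_of_nonneg_left (hz' j) (h0 j)
end
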